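/- Fubini-type theorem for rough convolutions: Let (B_β)_{β∈ℝ} be a monotone family of interpolation spaces, S a propagator on the full range (B_β)_{β∈ℝ}, and X = (X, 𝕏) a γ-rough path with γ ∈ (1/3, 1/2]. Then for every φ ∈ C([0,T]; B₀*) (continuous paths of bounded linear functionals on B₀) and every d-dimensional controlled path (y, y') ∈ D^{2γ}_{X,0}, and every t ∈ [0,T]: ∫₀^t ⟨ ∫₀^s S_{s,r} y_r · dX_r , φ_s ⟩ ds = ∫₀^t ( ∫_r^t ⟨ S_{s,r} y_r , φ_s ⟩ ds ) · dX_r, where on the left the inner integral is the rough convolution and the outer integral is a Riemann integral, while the right-hand side is the finite-dimensional rough integral against X of the ℝ^d-valued path r ↦ ( ∫_r^t ⟨ S_{s,r} y^i_r, φ_s ⟩ ds )_{i=1,…,d}, controlled by X with Gubinelli derivative r ↦ ( ∫_r^t ⟨ S_{s,r} y'^{,ij}_r, φ_s ⟩ ds )_{i,j}. -/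

import Mathlib

/-!
For a partition `p` of `[0, t]`, the rough sum on the right-hand side is the time integral of
paired germs: its `j`-th summand equals `∫_{p j}^t ⟨S_{s,p j} Ξ_j, φ_s⟩ ds`, where
`Ξ_j = y · δX + y' : 𝕏` is the germ on `[p j, p (j + 1)]` (`rough_summand_eq`). Exchanging the
finite sum and the integral, one has to compare, for each `s`, the compensated sum over the
partition points before `s` with the rough convolution `Z_s`.

The coboundary of the germ over an interval of length `h` is `O(h^{3γ})` in `B_{-2γ}`. Applying
`S_{τ,m}` smooths it into `B₀` at the cost of a factor `(τ - m)^{-2γ}`. With `κ = (3γ - 1)/2` and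
`ρ = (1 - γ)/2` this defect is dominated by `h^κ` times an increment of `x ↦ x^ρ` evaluated at the
distance to `τ` (`defect_scalar`); those increments telescope, so dyadic sewing gives a bound in
`B₀` that is uniform in the final time. Since the compensated sums converge to `Z` in `B_{-2γ}`,
the limit is identified and `Z` is approximated in `B₀`, uniformly in time (`convSum_close`).

The only remaining discrepancy comes from the germ whose interval contains `s`. Its contribution
is `O(mesh^γ)` (`local_term_bound`, `roughSum_approx`). Consequently `s ↦ ⟨Z_s, φ_s⟩` is a uniform
limit of integrable functions, hence integrable, and the rough sums converge to its integral.
-/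

/- Framework for rough evolution equations on a monotone family of interpolation
spaces.  The family `(B_β)_{β ∈ ℝ}` is modelled inside a fixed ambient real vector
space `E`: each level is a submodule `carrier β ≤ E` together with a norm function
`nrm β : E → ℝ`. -/

namespace RoughEvol

/-- `(t,s) ∈ Δ₂` over `[a,b]` : `a ≤ s ≤ t ≤ b`. -/
def Mem2 (a b s t : ℝ) : Prop := a ≤ s ∧ s ≤ t ∧ t ≤ b

/-- `(t,u,s) ∈ Δ₃` over `[a,b]`. -/
def Mem3 (a b s u t : ℝ) : Prop := a ≤ s ∧ s ≤ u ∧ u ≤ t ∧ t ≤ b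

/-- A partition `s = p 0 < p 1 < ⋯ < p k = t` of `[s,t]`. -/
structure IsPartition (s t : ℝ) (k : ℕ) (p : ℕ → ℝ) : Prop where
  pos : 0 < k
  first : p 0 = s
  last : p k = t
  mono : ∀ i < k, p i < p (i + 1)

/-- The mesh of the partition is at most `δ`. -/
def MeshLE (k : ℕ) (p : ℕ → ℝ) (δ : ℝ) : Prop := ∀ i < k, p (i + 1) - p i ≤ δ

variable (E : Type*) [AddCommGroup E] [Module ℝ E]

/-- A monotone family of interpolation spaces `(B_β)_{β∈ℝ}`, modelled inside the ambient
module `E`: separable Banach spaces `(carrier β, nrm β)`, decreasing in `β`, with dense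
continuous embeddings and the interpolation inequality
`|x|_β^{γ-α} ≤ C |x|_α^{γ-β} |x|_γ^{β-α}` for `α ≤ β ≤ γ`. -/
structure Scale : Type _ where
  carrier : ℝ → Submodule ℝ E
  nrm : ℝ → E → ℝ
  antitone : ∀ ⦃α β : ℝ⦄, α ≤ β → carrier β ≤ carrier α
  nrm_nonneg : ∀ β x, 0 ≤ nrm β x
  nrm_zero : ∀ β, nrm β 0 = 0
  eq_zero_of_nrm : ∀ β, ∀ x ∈ carrier β, nrm β x = 0 → x = 0
  nrm_add : ∀ β x y, nrm β (x + y) ≤ nrm β x + nrm β y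
  nrm_smul : ∀ β (r : ℝ) x, nrm β (r • x) = |r| * nrm β x
  embConst : ℝ → ℝ → ℝ
  emb_le : ∀ ⦃α β : ℝ⦄, α ≤ β → ∀ x ∈ carrier β, nrm α x ≤ embConst α β * nrm β x
  dense_emb : ∀ ⦃α β : ℝ⦄, α ≤ β → ∀ x ∈ carrier α, ∀ ε > (0:ℝ),
    ∃ y ∈ carrier β, nrm α (x - y) < ε
  interpConst : ℝ
  interp : ∀ ⦃α β γ : ℝ⦄, α ≤ β → β ≤ γ → ∀ x ∈ carrier γ,
    nrm β x ^ (γ - α) ≤ interpConst * (nrm α x ^ (γ - β) * nrm γ x ^ (β - α))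
  complete : ∀ (β : ℝ) (u : ℕ → E), (∀ n, u n ∈ carrier β) →
    (∀ ε > (0:ℝ), ∃ N, ∀ m ≥ N, ∀ n ≥ N, nrm β (u m - u n) < ε) →
    ∃ x ∈ carrier β, Filter.Tendsto (fun n => nrm β (u n - x)) Filter.atTop (nhds 0)
  separable : ∀ β : ℝ, ∃ D : Set E, D.Countable ∧ ↑D ⊆ (carrier β : Set E) ∧
    ∀ x ∈ carrier β, ∀ ε > (0:ℝ), ∃ y ∈ D, nrm β (x - y) < ε

variable {E}

/-- Supremum norm `|f|_{0,α}` of a path over `[a,b]`. -/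
noncomputable def sup0 (Sc : Scale E) (a b α : ℝ) (f : ℝ → E) : ℝ :=
  sSup {c : ℝ | ∃ t, a ≤ t ∧ t ≤ b ∧ c = Sc.nrm α (f t)}

/-- Hölder seminorm `[g]_{γ,α}` of a two-parameter function over `[a,b]`. -/
noncomputable def hol2 (Sc : Scale E) (a b γ α : ℝ) (g : ℝ → ℝ → E) : ℝ :=
  sSup {c : ℝ | ∃ s t, a ≤ s ∧ s < t ∧ t ≤ b ∧ c = Sc.nrm α (g t s) / (t - s) ^ γ}

/-- Two-exponent Hölder seminorm `[h]_{γ₁,γ₂,α}` of a three-parameter function. -/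
noncomputable def hol3 (Sc : Scale E) (a b γ₁ γ₂ α : ℝ) (h : ℝ → ℝ → ℝ → E) : ℝ :=
  sSup {c : ℝ | ∃ s u t, a ≤ s ∧ s < u ∧ u < t ∧ t ≤ b ∧
    c = Sc.nrm α (h t u s) / ((t - u) ^ γ₁ * (u - s) ^ γ₂)}

/-- Vector versions of the above (sup over the components). -/
noncomputable def sup0v (Sc : Scale E) (a b α : ℝ) {d : ℕ} (f : ℝ → Fin d → E) : ℝ :=
  sSup {c : ℝ | ∃ (i : Fin d) (t : ℝ), a ≤ t ∧ t ≤ b ∧ c = Sc.nrm α (f t i)}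

noncomputable def hol2v (Sc : Scale E) (a b γ α : ℝ) {d : ℕ} (g : ℝ → ℝ → Fin d → E) : ℝ :=
  sSup {c : ℝ | ∃ (i : Fin d) (s t : ℝ), a ≤ s ∧ s < t ∧ t ≤ b ∧
    c = Sc.nrm α (g t s i) / (t - s) ^ γ}

/-- Continuity of a path with values in `B_α`, on `[a,b]`. -/
def ContPath (Sc : Scale E) (a b α : ℝ) (f : ℝ → E) : Prop :=
  ∀ t, a ≤ t → t ≤ b → ∀ ε > (0:ℝ), ∃ δ > (0:ℝ), ∀ s, a ≤ s → s ≤ b → |s - t| < δ →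
    Sc.nrm α (f s - f t) < ε

/-- `[g]_{γ,α} < ∞` : the two-parameter function `g` is `γ`-Hölder in `B_α` over `[a,b]`. -/
def HolBdd (Sc : Scale E) (a b γ α : ℝ) (g : ℝ → ℝ → E) : Prop :=
  ∃ C : ℝ, ∀ s t, Mem2 a b s t → Sc.nrm α (g t s) ≤ C * (t - s) ^ γ

/-- `γ`-Hölder seminorm of a `ℝ^d`-valued path (components-wise). -/
noncomputable def xHol (a b γ : ℝ) {d : ℕ} (X : ℝ → Fin d → ℝ) : ℝ :=
  sSup {c : ℝ | ∃ (i : Fin d) (s t : ℝ), a ≤ s ∧ s < t ∧ t ≤ b ∧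
    c = |X t i - X s i| / (t - s) ^ γ}

/-- `2γ`-Hölder seminorm of the second-order process. -/
noncomputable def xxHol (a b γ : ℝ) {d : ℕ} (XX : ℝ → ℝ → Fin d → Fin d → ℝ) : ℝ :=
  sSup {c : ℝ | ∃ (i j : Fin d) (s t : ℝ), a ≤ s ∧ s < t ∧ t ≤ b ∧
    c = |XX t s i j| / (t - s) ^ (2 * γ)}

/-- `ρ_γ(X) = [X]_γ + [𝕏]_{2γ}`. -/
noncomputable def rho (a b γ : ℝ) {d : ℕ} (X : ℝ → Fin d → ℝ)
    (XX : ℝ → ℝ → Fin d → Fin d → ℝ) : ℝ :=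
  xHol a b γ X + xxHol a b γ XX

/-- A (two-step) `γ`-rough path over `[a,b]` with values in `ℝ^d`. -/
structure IsRoughPath (a b γ : ℝ) {d : ℕ} (X : ℝ → Fin d → ℝ)
    (XX : ℝ → ℝ → Fin d → Fin d → ℝ) : Prop where
  contX : ∀ i, ContinuousOn (fun t => X t i) (Set.Icc a b)
  holX : ∃ C : ℝ, ∀ i s t, Mem2 a b s t → |X t i - X s i| ≤ C * (t - s) ^ γ
  contXX : ∀ i j, ContinuousOn (fun q : ℝ × ℝ => XX q.1 q.2 i j) {q : ℝ × ℝ | Mem2 a b q.2 q.1}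
  holXX : ∃ C : ℝ, ∀ i j s t, Mem2 a b s t → |XX t s i j| ≤ C * (t - s) ^ (2 * γ)
  chen : ∀ i j s u t, Mem3 a b s u t →
    XX t s i j - XX t u i j - XX u s i j = (X t i - X u i) * (X u j - X s j)

/-- The remainder `R^y_{t,s} = δy_{t,s} - Σ_i y'^{,i}_s δX^i_{t,s}` of a controlled path. -/
def ctrlRem {d : ℕ} (X : ℝ → Fin d → ℝ) (y : ℝ → E) (y' : ℝ → Fin d → E) (t s : ℝ) : E :=
  y t - y s - ∑ i, (X t i - X s i) • y' s i

/-- `(y,y') ∈ D^{2γ}_{X,α}([a,b])`: the pair is controlled by `X` according to `B_α`. -/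
structure IsControlled (Sc : Scale E) (a b γ α : ℝ) {d : ℕ} (X : ℝ → Fin d → ℝ)
    (y : ℝ → E) (y' : ℝ → Fin d → E) : Prop where
  y_mem : ∀ t, a ≤ t → t ≤ b → y t ∈ Sc.carrier α
  y_cont : ContPath Sc a b α y
  y'_mem : ∀ (i : Fin d) t, a ≤ t → t ≤ b → y' t i ∈ Sc.carrier (α - γ)
  y'_cont : ∀ i : Fin d, ContPath Sc a b (α - γ) (fun t => y' t i)
  y'_hol : ∃ C : ℝ, ∀ (i : Fin d) s t, Mem2 a b s t →
    Sc.nrm (α - 2 * γ) (y' t i - y' s i) ≤ C * (t - s) ^ γ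
  rem_hol1 : HolBdd Sc a b γ (α - γ) (ctrlRem X y y')
  rem_hol2 : HolBdd Sc a b (2 * γ) (α - 2 * γ) (ctrlRem X y y')

/-- The norm `‖y,y'‖_{D^{2γ}_{X,α}}` of a controlled path. -/
noncomputable def ctrlNorm (Sc : Scale E) (a b γ α : ℝ) {d : ℕ} (X : ℝ → Fin d → ℝ)
    (y : ℝ → E) (y' : ℝ → Fin d → E) : ℝ :=
  sup0 Sc a b α y + sup0v Sc a b (α - γ) y'
    + hol2v Sc a b γ (α - 2 * γ) (fun t s i => y' t i - y' s i)
    + hol2 Sc a b γ (α - γ) (ctrlRem X y y')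
    + hol2 Sc a b (2 * γ) (α - 2 * γ) (ctrlRem X y y')

/-- A `d`-dimensional controlled path: each component is controlled. -/
def IsControlledVec (Sc : Scale E) (a b γ α : ℝ) {d : ℕ} (X : ℝ → Fin d → ℝ)
    (y : ℝ → Fin d → E) (y' : ℝ → Fin d → Fin d → E) : Prop :=
  ∀ i : Fin d, IsControlled Sc a b γ α X (fun t => y t i) (fun t j => y' t i j)

/-- The norm of a `d`-dimensional controlled path (sum of the component norms). -/
noncomputable def ctrlNormVec (Sc : Scale E) (a b γ α : ℝ) {d : ℕ} (X : ℝ → Fin d → ℝ)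
    (y : ℝ → Fin d → E) (y' : ℝ → Fin d → Fin d → E) : ℝ :=
  ∑ i, ctrlNorm Sc a b γ α X (fun t => y t i) (fun t j => y' t i j)

/-- `S` is a propagator on the full range `(B_β)_{β∈ℝ}` associated with the family
`(L_t)_{t∈[0,T]}`, in the sense of (P1)–(P4) of the paper. -/
structure IsPropagator (Sc : Scale E) (T : ℝ) (L : ℝ → E →ₗ[ℝ] E)
    (S : ℝ → ℝ → E →ₗ[ℝ] E) : Prop where
  mapsTo : ∀ (β : ℝ) s t, Mem2 0 T s t → ∀ x ∈ Sc.carrier β, S t s x ∈ Sc.carrier β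
  L_mapsTo : ∀ (β : ℝ) t, 0 ≤ t → t ≤ T → ∀ x ∈ Sc.carrier (β + 1), L t x ∈ Sc.carrier β
  L_bdd : ∀ β : ℝ, ∃ C : ℝ, ∀ t, 0 ≤ t → t ≤ T → ∀ x ∈ Sc.carrier (β + 1),
    Sc.nrm β (L t x) ≤ C * Sc.nrm (β + 1) x
  -- (P1) strong continuity and exponential growth
  strong_cont : ∀ β : ℝ, ∀ x ∈ Sc.carrier β, ∀ s t, Mem2 0 T s t → ∀ ε > (0:ℝ),
    ∃ δ > (0:ℝ), ∀ s' t', Mem2 0 T s' t' → |s' - s| < δ → |t' - t| < δ →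
      Sc.nrm β (S t' s' x - S t s x) < ε
  growth : ∀ β : ℝ, ∃ lam : ℝ, ∀ s t, Mem2 0 T s t → ∀ x ∈ Sc.carrier β,
    Sc.nrm β (S t s x) ≤ Real.exp (lam * (t - s)) * Sc.nrm β x
  -- (P2) identity and the propagator (flow) property
  idem : ∀ t, 0 ≤ t → t ≤ T → ∀ x, S t t x = x
  comp : ∀ s u t, Mem3 0 T s u t → ∀ x, S t u (S u s x) = S t s x
  -- (P3) differential equations `d/dt S_{t,s} = L_t S_{t,s}`, `d/ds S_{t,s} = -S_{t,s} L_s`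
  deriv_t : ∀ (β : ℝ) s, 0 ≤ s → ∀ x ∈ Sc.carrier (β + 1), ∀ t, s ≤ t → t ≤ T →
    ∀ ε > (0:ℝ), ∃ δ > (0:ℝ), ∀ t', s ≤ t' → t' ≤ T → t' ≠ t → |t' - t| < δ →
      Sc.nrm β ((t' - t)⁻¹ • (S t' s x - S t s x) - L t (S t s x)) < ε
  deriv_s : ∀ (β : ℝ) t, t ≤ T → ∀ x ∈ Sc.carrier (β + 1), ∀ s, 0 ≤ s → s ≤ t →
    ∀ ε > (0:ℝ), ∃ δ > (0:ℝ), ∀ s', 0 ≤ s' → s' ≤ t → s' ≠ s → |s' - s| < δ →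
      Sc.nrm β ((s' - s)⁻¹ • (S t s' x - S t s x) + S t s (L s x)) < ε
  -- (P4) parabolic smoothing
  smoothing : ∀ β β' : ℝ, β ≤ β' → ∃ C : ℝ, ∀ s t, 0 ≤ s → s < t → t ≤ T →
    ∀ x ∈ Sc.carrier β, S t s x ∈ Sc.carrier β' ∧
      Sc.nrm β' (S t s x) ≤ C * (t - s) ^ (β - β') * Sc.nrm β x
  id_smoothing : ∀ β : ℝ, ∃ C : ℝ, ∀ σ, 0 ≤ σ → σ ≤ 1 → ∀ s t, Mem2 0 T s t →
    ∀ x ∈ Sc.carrier (β + σ), Sc.nrm β (S t s x - x) ≤ C * (t - s) ^ σ * Sc.nrm (β + σ) x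

/-- The local germ `y_s · δX_{t,s} + y'_s : 𝕏_{t,s}` of the rough convolution. -/
def germ {d : ℕ} (X : ℝ → Fin d → ℝ) (XX : ℝ → ℝ → Fin d → Fin d → ℝ)
    (y : ℝ → Fin d → E) (y' : ℝ → Fin d → Fin d → E) (t s : ℝ) : E :=
  (∑ i, (X t i - X s i) • y s i) + ∑ i, ∑ j, XX t s i j • y' s i j

/-- The compensated Riemann sum `Σ_{[u,v]∈π} S_{t,u} (y_u · δX_{v,u} + y'_u : 𝕏_{v,u})`. -/
noncomputable def convSum {d : ℕ} (S : ℝ → ℝ → E →ₗ[ℝ] E) (X : ℝ → Fin d → ℝ)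
    (XX : ℝ → ℝ → Fin d → Fin d → ℝ) (y : ℝ → Fin d → E) (y' : ℝ → Fin d → Fin d → E)
    (t : ℝ) (k : ℕ) (p : ℕ → ℝ) : E :=
  ∑ j ∈ Finset.range k, S t (p j) (germ X XX y y' (p (j + 1)) (p j))

/-- `z` is the rough convolution `z_t = ∫₀^t S_{t,r} y_r · dX_r` on `[0,b]`: for every
`t ∈ (0,b]` the compensated Riemann sums over partitions of `[0,t]` converge to `z_t`
in `B_ν` as the mesh tends to `0`. -/
def IsRoughConv (Sc : Scale E) (b ν : ℝ) {d : ℕ} (S : ℝ → ℝ → E →ₗ[ℝ] E)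
    (X : ℝ → Fin d → ℝ) (XX : ℝ → ℝ → Fin d → Fin d → ℝ)
    (y : ℝ → Fin d → E) (y' : ℝ → Fin d → Fin d → E) (z : ℝ → E) : Prop :=
  z 0 = 0 ∧ ∀ t, 0 < t → t ≤ b → ∀ ε > (0:ℝ), ∃ δ > (0:ℝ), ∀ k p, IsPartition 0 t k p →
    MeshLE k p δ → Sc.nrm ν (convSum S X XX y y' t k p - z t) < ε

/-- Riemann sums for the drift integral `∫₀^t S_{t,r} g_r dr` (left endpoint tags). -/
noncomputable def driftSum (S : ℝ → ℝ → E →ₗ[ℝ] E) (g : ℝ → E) (t : ℝ) (k : ℕ)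
    (p : ℕ → ℝ) : E :=
  ∑ j ∈ Finset.range k, (p (j + 1) - p j) • S t (p j) (g (p j))

/-- `w` is the (Bochner) integral `w_t = ∫₀^t S_{t,r} g_r dr` on `[0,b]`, characterised via
convergence of Riemann sums in `B_ν`. -/
def IsDriftIntegral (Sc : Scale E) (b ν : ℝ) (S : ℝ → ℝ → E →ₗ[ℝ] E) (g : ℝ → E)
    (w : ℝ → E) : Prop :=
  w 0 = 0 ∧ ∀ t, 0 < t → t ≤ b → ∀ ε > (0:ℝ), ∃ δ > (0:ℝ), ∀ k p, IsPartition 0 t k p →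
    MeshLE k p δ → Sc.nrm ν (driftSum S g t k p - w t) < ε

/-- Membership in `C^k_{a,-σ}(B)` for `k = 3` (with the Fréchet derivatives given as data):
for every `θ ≥ a`, `F` maps `B_θ` into `B_{θ-σ}`, is three times differentiable there, and
`F, DF, D²F, D³F` map bounded sets to bounded sets. -/
structure IsC3 (Sc : Scale E) (a σ : ℝ) (F : E → E) (DF : E → E →ₗ[ℝ] E)
    (D2F : E → E →ₗ[ℝ] E →ₗ[ℝ] E) (D3F : E → E →ₗ[ℝ] E →ₗ[ℝ] E →ₗ[ℝ] E) : Prop where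
  mapsF : ∀ θ, a ≤ θ → ∀ x ∈ Sc.carrier θ, F x ∈ Sc.carrier (θ - σ)
  mapsDF : ∀ θ, a ≤ θ → ∀ x ∈ Sc.carrier θ, ∀ h ∈ Sc.carrier θ, DF x h ∈ Sc.carrier (θ - σ)
  mapsD2F : ∀ θ, a ≤ θ → ∀ x ∈ Sc.carrier θ, ∀ h ∈ Sc.carrier θ, ∀ k ∈ Sc.carrier θ,
    D2F x h k ∈ Sc.carrier (θ - σ)
  mapsD3F : ∀ θ, a ≤ θ → ∀ x ∈ Sc.carrier θ, ∀ h ∈ Sc.carrier θ, ∀ k ∈ Sc.carrier θ,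
    ∀ l ∈ Sc.carrier θ, D3F x h k l ∈ Sc.carrier (θ - σ)
  bddF : ∀ θ, a ≤ θ → ∀ R : ℝ, ∃ M : ℝ, ∀ x ∈ Sc.carrier θ, Sc.nrm θ x ≤ R →
    Sc.nrm (θ - σ) (F x) ≤ M
  bddDF : ∀ θ, a ≤ θ → ∀ R : ℝ, ∃ M : ℝ, ∀ x ∈ Sc.carrier θ, Sc.nrm θ x ≤ R →
    ∀ h ∈ Sc.carrier θ, Sc.nrm (θ - σ) (DF x h) ≤ M * Sc.nrm θ h
  bddD2F : ∀ θ, a ≤ θ → ∀ R : ℝ, ∃ M : ℝ, ∀ x ∈ Sc.carrier θ, Sc.nrm θ x ≤ R →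
    ∀ h ∈ Sc.carrier θ, ∀ k ∈ Sc.carrier θ,
      Sc.nrm (θ - σ) (D2F x h k) ≤ M * Sc.nrm θ h * Sc.nrm θ k
  bddD3F : ∀ θ, a ≤ θ → ∀ R : ℝ, ∃ M : ℝ, ∀ x ∈ Sc.carrier θ, Sc.nrm θ x ≤ R →
    ∀ h ∈ Sc.carrier θ, ∀ k ∈ Sc.carrier θ, ∀ l ∈ Sc.carrier θ,
      Sc.nrm (θ - σ) (D3F x h k l) ≤ M * Sc.nrm θ h * Sc.nrm θ k * Sc.nrm θ l
  diffF : ∀ θ, a ≤ θ → ∀ x ∈ Sc.carrier θ, ∀ ε > (0:ℝ), ∃ δ > (0:ℝ), ∀ h ∈ Sc.carrier θ,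
    Sc.nrm θ h < δ → Sc.nrm (θ - σ) (F (x + h) - F x - DF x h) ≤ ε * Sc.nrm θ h
  diffDF : ∀ θ, a ≤ θ → ∀ x ∈ Sc.carrier θ, ∀ k ∈ Sc.carrier θ, ∀ ε > (0:ℝ), ∃ δ > (0:ℝ),
    ∀ h ∈ Sc.carrier θ, Sc.nrm θ h < δ →
      Sc.nrm (θ - σ) (DF (x + h) k - DF x k - D2F x h k) ≤ ε * Sc.nrm θ h * Sc.nrm θ k
  diffD2F : ∀ θ, a ≤ θ → ∀ x ∈ Sc.carrier θ, ∀ k ∈ Sc.carrier θ, ∀ l ∈ Sc.carrier θ,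
    ∀ ε > (0:ℝ), ∃ δ > (0:ℝ), ∀ h ∈ Sc.carrier θ, Sc.nrm θ h < δ →
      Sc.nrm (θ - σ) (D2F (x + h) k l - D2F x k l - D3F x h k l)
        ≤ ε * Sc.nrm θ h * Sc.nrm θ k * Sc.nrm θ l

/-- Membership in `Lip_{a,-δ}(B)`: for every `θ ≥ a`, `N` maps `B_θ` into `B_{θ-δ}`, sends
bounded sets to bounded sets, and is Lipschitz on bounded sets (uniformly on bounded sets). -/
structure IsLip (Sc : Scale E) (a δ : ℝ) (N : E → E) : Prop where
  maps : ∀ θ, a ≤ θ → ∀ x ∈ Sc.carrier θ, N x ∈ Sc.carrier (θ - δ)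
  bdd : ∀ θ, a ≤ θ → ∀ R : ℝ, ∃ M : ℝ, ∀ x ∈ Sc.carrier θ, Sc.nrm θ x ≤ R →
    Sc.nrm (θ - δ) (N x) ≤ M
  lip : ∀ θ, a ≤ θ → ∀ R : ℝ, ∃ K : ℝ, ∀ x ∈ Sc.carrier θ, ∀ y ∈ Sc.carrier θ,
    Sc.nrm θ x ≤ R → Sc.nrm θ y ≤ R → Sc.nrm (θ - δ) (N x - N y) ≤ K * Sc.nrm θ (x - y)

/-- `u` is a mild solution of `du = L u dt + N(u) dt + F(u)·d𝐗`, `u₀ = x`, on `[0,τ)`: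
`(u, F(u))` is controlled according to `B_α` on every `[0,b]`, `b < τ`, and the Duhamel
formula holds, the drift integral and the rough convolution of `(F(u), DF(u)F(u))` being
characterised as limits of (compensated) Riemann sums. -/
structure IsMildSol (Sc : Scale E) (γ α σ : ℝ) {d : ℕ}
    (S : ℝ → ℝ → E →ₗ[ℝ] E) (X : ℝ → Fin d → ℝ) (XX : ℝ → ℝ → Fin d → Fin d → ℝ)
    (N : E → E) (F : Fin d → E → E) (DF : Fin d → E → E →ₗ[ℝ] E)
    (x : E) (τ : ℝ) (u : ℝ → E) : Prop where
  ctrl : ∀ b, 0 < b → b < τ → IsControlled Sc 0 b γ α X u (fun t i => F i (u t))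
  eqn : ∃ w z : ℝ → E,
    (∀ b, 0 < b → b < τ → IsDriftIntegral Sc b α S (fun r => N (u r)) w) ∧
    (∀ b, 0 < b → b < τ → IsRoughConv Sc b (α - σ - 2 * γ) S X XX
      (fun t i => F i (u t)) (fun t i j => DF i (u t) (F j (u t))) z) ∧
    (∀ t, 0 ≤ t → t < τ → u t = S t 0 x + w t + z t)

/-- Mild solution on a closed interval `[0,b]` (no blow-up before `b`). -/
structure IsMildSolC (Sc : Scale E) (γ α σ : ℝ) {d : ℕ}
    (S : ℝ → ℝ → E →ₗ[ℝ] E) (X : ℝ → Fin d → ℝ) (XX : ℝ → ℝ → Fin d → Fin d → ℝ)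
    (N : E → E) (F : Fin d → E → E) (DF : Fin d → E → E →ₗ[ℝ] E)
    (x : E) (b : ℝ) (u : ℝ → E) : Prop where
  ctrl : IsControlled Sc 0 b γ α X u (fun t i => F i (u t))
  eqn : ∃ w z : ℝ → E,
    IsDriftIntegral Sc b α S (fun r => N (u r)) w ∧
    IsRoughConv Sc b (α - σ - 2 * γ) S X XX
      (fun t i => F i (u t)) (fun t i j => DF i (u t) (F j (u t))) z ∧
    (∀ t, 0 ≤ t → t ≤ b → u t = S t 0 x + w t + z t)

/-- Riemann sums for the (finite-dimensional) rough integral `∫ h · dX`. -/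
noncomputable def roughSumR {d : ℕ} (X : ℝ → Fin d → ℝ) (XX : ℝ → ℝ → Fin d → Fin d → ℝ)
    (h : ℝ → Fin d → ℝ) (h' : ℝ → Fin d → Fin d → ℝ) (k : ℕ) (p : ℕ → ℝ) : ℝ :=
  ∑ j ∈ Finset.range k,
    ((∑ i, h (p j) i * (X (p (j + 1)) i - X (p j) i))
      + ∑ i, ∑ i', h' (p j) i i' * XX (p (j + 1)) (p j) i i')

/-- `I = ∫₀^t h · dX` : the rough integral of the real controlled path `(h,h')`,
as the limit of the compensated Riemann sums. -/
def IsRoughIntegralR {d : ℕ} (X : ℝ → Fin d → ℝ) (XX : ℝ → ℝ → Fin d → Fin d → ℝ)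
    (h : ℝ → Fin d → ℝ) (h' : ℝ → Fin d → Fin d → ℝ) (t I : ℝ) : Prop :=
  (t = 0 → I = 0) ∧ ∀ ε > (0:ℝ), ∃ δ > (0:ℝ), ∀ k p, IsPartition 0 t k p →
    MeshLE k p δ → |roughSumR X XX h h' k p - I| < ε

end RoughEvol

namespace RoughEvol

section Aux

variable {E : Type*} [AddCommGroup E] [Module ℝ E]

/-! ### The level norms as seminorms -/

lemma Scale.nrm_neg (Sc : Scale E) (β : ℝ) (x : E) : Sc.nrm β (-x) = Sc.nrm β x := by
  simpa using Sc.nrm_smul β (-1) x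

lemma Scale.nrm_sub (Sc : Scale E) (β : ℝ) (x y : E) :
    Sc.nrm β (x - y) ≤ Sc.nrm β x + Sc.nrm β y := by
  have := Sc.nrm_add β x (-y)
  rwa [Sc.nrm_neg, ← sub_eq_add_neg] at this

lemma Scale.nrm_sum (Sc : Scale E) (β : ℝ) {ι : Type*} (s : Finset ι) (f : ι → E) :
    Sc.nrm β (∑ i ∈ s, f i) ≤ ∑ i ∈ s, Sc.nrm β (f i) := by
  classical
  induction s using Finset.induction_on with
  | empty => simp [Sc.nrm_zero]
  | insert a s ha ih =>
    rw [Finset.sum_insert ha, Finset.sum_insert ha]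
    exact (Sc.nrm_add _ _ _).trans (by gcongr)

lemma Scale.abs_nrm_sub (Sc : Scale E) (β : ℝ) (x y : E) :
    |Sc.nrm β x - Sc.nrm β y| ≤ Sc.nrm β (x - y) := by
  have h1 := Sc.nrm_add β (x - y) y
  have h2 := Sc.nrm_add β (y - x) x
  rw [← neg_sub x y, Sc.nrm_neg] at h2
  simp only [neg_sub, sub_add_cancel] at h1 h2
  rw [abs_le]; constructor <;> linarith

lemma ContPath.bdd {Sc : Scale E} {a b α : ℝ} {f : ℝ → E} (h : ContPath Sc a b α f) :
    ∃ M : ℝ, ∀ t, a ≤ t → t ≤ b → Sc.nrm α (f t) ≤ M := by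
  have hc : ContinuousOn (fun t => Sc.nrm α (f t)) (Set.Icc a b) := by
    rw [Metric.continuousOn_iff]
    intro t ht ε hε
    obtain ⟨δ, hδ, H⟩ := h t ht.1 ht.2 ε hε
    refine ⟨δ, hδ, fun s hs hst => ?_⟩
    exact (Sc.abs_nrm_sub _ _ _).trans_lt (H s hs.1 hs.2 hst)
  obtain ⟨M, hM⟩ := isCompact_Icc.bddAbove_image hc
  exact ⟨M, fun t h1 h2 => hM ⟨t, ⟨h1, h2⟩, rfl⟩⟩

/-! ### Uniform constants -/

/-- All quantitative hypotheses, with one common constant `K`. -/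
structure Bounds (Sc : Scale E) (T γ : ℝ) {d : ℕ} (S : ℝ → ℝ → E →ₗ[ℝ] E)
    (X : ℝ → Fin d → ℝ) (XX : ℝ → ℝ → Fin d → Fin d → ℝ)
    (y : ℝ → Fin d → E) (y' : ℝ → Fin d → Fin d → E) (φ : ℝ → E →ₗ[ℝ] ℝ) (K : ℝ) : Prop where
  nonneg : 0 ≤ K
  hX : ∀ i s t, Mem2 0 T s t → |X t i - X s i| ≤ K * (t - s) ^ γ
  hXX : ∀ i j s t, Mem2 0 T s t → |XX t s i j| ≤ K * (t - s) ^ (2 * γ)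
  hy : ∀ i t, 0 ≤ t → t ≤ T → Sc.nrm 0 (y t i) ≤ K
  hy' : ∀ i j t, 0 ≤ t → t ≤ T → Sc.nrm (0 - γ) (y' t i j) ≤ K
  hdy' : ∀ i j s t, Mem2 0 T s t → Sc.nrm (0 - 2 * γ) (y' t i j - y' s i j) ≤ K * (t - s) ^ γ
  hR : ∀ i s t, Mem2 0 T s t → Sc.nrm (0 - 2 * γ)
    (ctrlRem X (fun t => y t i) (fun t j => y' t i j) t s) ≤ K * (t - s) ^ (2 * γ)
  growth : ∀ s t, Mem2 0 T s t → ∀ x ∈ Sc.carrier 0, Sc.nrm 0 (S t s x) ≤ K * Sc.nrm 0 x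
  smooth1 : ∀ s t, 0 ≤ s → s < t → t ≤ T → ∀ x ∈ Sc.carrier (0 - γ),
    Sc.nrm 0 (S t s x) ≤ K * (t - s) ^ (-γ) * Sc.nrm (0 - γ) x
  smooth2 : ∀ s t, 0 ≤ s → s < t → t ≤ T → ∀ x ∈ Sc.carrier (0 - 2 * γ),
    Sc.nrm 0 (S t s x) ≤ K * (t - s) ^ (-(2 * γ)) * Sc.nrm (0 - 2 * γ) x
  id1 : ∀ s t, Mem2 0 T s t → ∀ x ∈ Sc.carrier (0 - γ),
    Sc.nrm (0 - 2 * γ) (S t s x - x) ≤ K * (t - s) ^ γ * Sc.nrm (0 - γ) x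
  id2 : ∀ s t, Mem2 0 T s t → ∀ x ∈ Sc.carrier 0,
    Sc.nrm (0 - 2 * γ) (S t s x - x) ≤ K * (t - s) ^ (2 * γ) * Sc.nrm 0 x
  hφ : ∀ t, 0 ≤ t → t ≤ T → ∀ v ∈ Sc.carrier 0, |φ t v| ≤ K * Sc.nrm 0 v

open Filter in
lemma eventually_of_mono {Q : ℝ → Prop} (mono : ∀ c c', c ≤ c' → Q c → Q c') (h : ∃ c, Q c) :
    ∀ᶠ c in atTop, Q c := by
  obtain ⟨c, hc⟩ := h
  filter_upwards [eventually_ge_atTop c] with c' h' using mono c c' h' hc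

open Filter in
lemma exists_bounds (Sc : Scale E) (T : ℝ)
    (L : ℝ → E →ₗ[ℝ] E) (S : ℝ → ℝ → E →ₗ[ℝ] E) (hS : IsPropagator Sc T L S)
    (γ : ℝ) (hγ₁ : 1/3 < γ) (hγ₂ : γ ≤ 1/2)
    {d : ℕ} (X : ℝ → Fin d → ℝ) (XX : ℝ → ℝ → Fin d → Fin d → ℝ)
    (hX : IsRoughPath 0 T γ X XX)
    (y : ℝ → Fin d → E) (y' : ℝ → Fin d → Fin d → E)
    (hctrl : IsControlledVec Sc 0 T γ 0 X y y') (φ : ℝ → E →ₗ[ℝ] ℝ)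
    (hφbdd : ∃ c : ℝ, ∀ t, 0 ≤ t → t ≤ T → ∀ v ∈ Sc.carrier 0, |φ t v| ≤ c * Sc.nrm 0 v) :
    ∃ K, Bounds Sc T γ S X XX y y' φ K := by
  have e1 : ∀ᶠ K in atTop, ∀ i s t, Mem2 0 T s t → |X t i - X s i| ≤ K * (t - s) ^ γ := by
    refine eventually_of_mono (fun c c' hc h i s t hm => (h i s t hm).trans ?_) hX.holX
    have := Real.rpow_nonneg (sub_nonneg.2 hm.2.1) γ
    gcongr
  have e2 : ∀ᶠ K in atTop, ∀ i j s t, Mem2 0 T s t → |XX t s i j| ≤ K * (t - s) ^ (2 * γ) := by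
    refine eventually_of_mono (fun c c' hc h i j s t hm => (h i j s t hm).trans ?_) hX.holXX
    have := Real.rpow_nonneg (sub_nonneg.2 hm.2.1) (2 * γ)
    gcongr
  have e3 : ∀ᶠ K in atTop, ∀ i t, 0 ≤ t → t ≤ T → Sc.nrm 0 (y t i) ≤ K := by
    rw [eventually_all]
    intro i
    exact eventually_of_mono (fun c c' hc h t h1 h2 => (h t h1 h2).trans hc)
      (hctrl i).y_cont.bdd
  have e4 : ∀ᶠ K in atTop, ∀ i j t, 0 ≤ t → t ≤ T → Sc.nrm (0 - γ) (y' t i j) ≤ K := by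
    rw [eventually_all]
    intro i
    rw [eventually_all]
    intro j
    exact eventually_of_mono (fun c c' hc h t h1 h2 => (h t h1 h2).trans hc)
      ((hctrl i).y'_cont j).bdd
  have e5 : ∀ᶠ K in atTop, ∀ i j s t, Mem2 0 T s t →
      Sc.nrm (0 - 2 * γ) (y' t i j - y' s i j) ≤ K * (t - s) ^ γ := by
    rw [eventually_all]
    intro i
    refine eventually_of_mono (fun c c' hc h j s t hm => (h j s t hm).trans ?_) (hctrl i).y'_hol
    have := Real.rpow_nonneg (sub_nonneg.2 hm.2.1) γ
    gcongr
  have e6 : ∀ᶠ K in atTop, ∀ i s t, Mem2 0 T s t → Sc.nrm (0 - 2 * γ)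
      (ctrlRem X (fun t => y t i) (fun t j => y' t i j) t s) ≤ K * (t - s) ^ (2 * γ) := by
    rw [eventually_all]
    intro i
    refine eventually_of_mono (fun c c' hc h s t hm => (h s t hm).trans ?_) (hctrl i).rem_hol2
    have := Real.rpow_nonneg (sub_nonneg.2 hm.2.1) (2 * γ)
    gcongr
  have e7 : ∀ᶠ K in atTop, ∀ s t, Mem2 0 T s t → ∀ x ∈ Sc.carrier 0,
      Sc.nrm 0 (S t s x) ≤ K * Sc.nrm 0 x := by
    refine eventually_of_mono (fun c c' hc h s t hm x hx => (h s t hm x hx).trans ?_) ?_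
    · have := Sc.nrm_nonneg 0 x
      gcongr
    · obtain ⟨l, hl⟩ := hS.growth 0
      refine ⟨Real.exp (|l| * T), fun s t hm x hx => (hl s t hm x hx).trans ?_⟩
      have := Sc.nrm_nonneg 0 x
      obtain ⟨h1, h2, h3⟩ := hm
      have : l * (t - s) ≤ |l| * T := by
        calc l * (t - s) ≤ |l| * (t - s) := by
              have := le_abs_self l
              have : 0 ≤ t - s := by linarith
              gcongr
          _ ≤ |l| * T := by
              have := abs_nonneg l
              have : t - s ≤ T := by linarith
              gcongr
      gcongr
  have e8 : ∀ᶠ K in atTop, ∀ s t, 0 ≤ s → s < t → t ≤ T → ∀ x ∈ Sc.carrier (0 - γ),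
      Sc.nrm 0 (S t s x) ≤ K * (t - s) ^ (-γ) * Sc.nrm (0 - γ) x := by
    refine eventually_of_mono
      (fun c c' hc h s t h1 h2 h3 x hx => (h s t h1 h2 h3 x hx).trans ?_) ?_
    · have := Sc.nrm_nonneg (0 - γ) x
      have := Real.rpow_nonneg (sub_nonneg.2 h2.le) (-γ)
      gcongr
    · obtain ⟨C, hC⟩ := hS.smoothing (0 - γ) 0 (by linarith)
      refine ⟨C, fun s t h1 h2 h3 x hx => ?_⟩
      have := (hC s t h1 h2 h3 x hx).2
      rwa [show (0 - γ - 0 : ℝ) = -γ by ring] at this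
  have e9 : ∀ᶠ K in atTop, ∀ s t, 0 ≤ s → s < t → t ≤ T → ∀ x ∈ Sc.carrier (0 - 2 * γ),
      Sc.nrm 0 (S t s x) ≤ K * (t - s) ^ (-(2 * γ)) * Sc.nrm (0 - 2 * γ) x := by
    refine eventually_of_mono
      (fun c c' hc h s t h1 h2 h3 x hx => (h s t h1 h2 h3 x hx).trans ?_) ?_
    · have := Sc.nrm_nonneg (0 - 2 * γ) x
      have := Real.rpow_nonneg (sub_nonneg.2 h2.le) (-(2 * γ))
      gcongr
    · obtain ⟨C, hC⟩ := hS.smoothing (0 - 2 * γ) 0 (by linarith)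
      refine ⟨C, fun s t h1 h2 h3 x hx => ?_⟩
      have := (hC s t h1 h2 h3 x hx).2
      rwa [show (0 - 2 * γ - 0 : ℝ) = -(2 * γ) by ring] at this
  have e10 : ∀ᶠ K in atTop, ∀ s t, Mem2 0 T s t → ∀ x ∈ Sc.carrier (0 - γ),
      Sc.nrm (0 - 2 * γ) (S t s x - x) ≤ K * (t - s) ^ γ * Sc.nrm (0 - γ) x := by
    refine eventually_of_mono (fun c c' hc h s t hm x hx => (h s t hm x hx).trans ?_) ?_
    · have := Sc.nrm_nonneg (0 - γ) x
      have := Real.rpow_nonneg (sub_nonneg.2 hm.2.1) γ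
      gcongr
    · obtain ⟨C, hC⟩ := hS.id_smoothing (0 - 2 * γ)
      refine ⟨C, fun s t hm x hx => ?_⟩
      have := hC γ (by linarith) (by linarith) s t hm x
      rw [show (0 - 2 * γ + γ : ℝ) = 0 - γ by ring] at this
      exact this hx
  have e11 : ∀ᶠ K in atTop, ∀ s t, Mem2 0 T s t → ∀ x ∈ Sc.carrier 0,
      Sc.nrm (0 - 2 * γ) (S t s x - x) ≤ K * (t - s) ^ (2 * γ) * Sc.nrm 0 x := by
    refine eventually_of_mono (fun c c' hc h s t hm x hx => (h s t hm x hx).trans ?_) ?_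
    · have := Sc.nrm_nonneg 0 x
      have := Real.rpow_nonneg (sub_nonneg.2 hm.2.1) (2 * γ)
      gcongr
    · obtain ⟨C, hC⟩ := hS.id_smoothing (0 - 2 * γ)
      refine ⟨C, fun s t hm x hx => ?_⟩
      have := hC (2 * γ) (by linarith) (by linarith) s t hm x
      rw [show (0 - 2 * γ + 2 * γ : ℝ) = 0 by ring] at this
      exact this hx
  have e12 : ∀ᶠ K in atTop, ∀ t, 0 ≤ t → t ≤ T → ∀ v ∈ Sc.carrier 0,
      |φ t v| ≤ K * Sc.nrm 0 v := by
    refine eventually_of_mono (fun c c' hc h t h1 h2 x hx => (h t h1 h2 x hx).trans ?_) hφbdd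
    have := Sc.nrm_nonneg 0 x
    gcongr
  obtain ⟨K, k0, k1, k2, k3, k4, k5, k6, k7, k8, k9, k10, k11, k12⟩ :=
    ((eventually_ge_atTop (0:ℝ)).and <| e1.and <| e2.and <| e3.and <| e4.and <| e5.and <|
      e6.and <| e7.and <| e8.and <| e9.and <| e10.and <| e11.and e12).exists
  exact ⟨K, k0, k1, k2, k3, k4, k5, k6, k7, k8, k9, k10, k11, k12⟩

lemma rpow_two_mul {h γ : ℝ} (hh : 0 ≤ h) (hγ : 0 < γ) : h ^ (2 * γ) = h ^ γ * h ^ γ := by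
  rw [two_mul, Real.rpow_add_of_nonneg hh hγ.le hγ.le]

/-! ### Estimates on the germ -/

section Germ

variable {Sc : Scale E} {T γ : ℝ} {L : ℝ → E →ₗ[ℝ] E} {S : ℝ → ℝ → E →ₗ[ℝ] E}
  {d : ℕ} {X : ℝ → Fin d → ℝ} {XX : ℝ → ℝ → Fin d → Fin d → ℝ}
  {y : ℝ → Fin d → E} {y' : ℝ → Fin d → Fin d → E} {φ : ℝ → E →ₗ[ℝ] ℝ} {K : ℝ}

lemma germ_mem (hγ : 0 < γ) (hctrl : IsControlledVec Sc 0 T γ 0 X y y') {a b : ℝ}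
    (ha : 0 ≤ a) (haT : a ≤ T) : germ X XX y y' b a ∈ Sc.carrier (0 - γ) := by
  refine Submodule.add_mem _ (Submodule.sum_mem _ fun i _ => Submodule.smul_mem _ _ ?_)
    (Submodule.sum_mem _ fun i _ => Submodule.sum_mem _ fun j _ => Submodule.smul_mem _ _ ?_)
  · exact Sc.antitone (by linarith) ((hctrl i).y_mem a ha haT)
  · exact (hctrl i).y'_mem j a ha haT

/-- The `B₀`-norm of a propagated germ. The upper end `b` of the increment may lie on either side
of the time `s` at which the propagated germ is observed. -/
lemma germ_bound (hctrl : IsControlledVec Sc 0 T γ 0 X y y')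
    (hB : Bounds Sc T γ S X XX y y' φ K) :
    ∃ M, 0 ≤ M ∧ ∀ a b s, 0 ≤ a → a ≤ b → b ≤ T → a < s → s ≤ T →
      Sc.nrm 0 (S s a (germ X XX y y' b a)) ≤
        M * ((b - a) ^ γ + (b - a) ^ (2 * γ) * (s - a) ^ (-γ)) := by
  have hK := hB.nonneg
  refine ⟨(d + d * d) * K ^ 3, by positivity, fun a b s ha hab hbT has hsT => ?_⟩
  have hp1 := Real.rpow_nonneg (sub_nonneg.2 hab) γ
  have hp2 := Real.rpow_nonneg (sub_nonneg.2 hab) (2 * γ)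
  have hp3 := Real.rpow_nonneg (sub_nonneg.2 has.le) (-γ)
  set A := (b - a) ^ γ
  set B := (b - a) ^ (2 * γ)
  set D := (s - a) ^ (-γ)
  have haT : a ≤ T := hab.trans hbT
  simp only [germ, map_add, map_sum, map_smul]
  have h1 : Sc.nrm 0 (∑ i, (X b i - X a i) • S s a (y a i)) ≤ ∑ _i : Fin d, K * A * (K * K) := by
    refine (Sc.nrm_sum _ _ _).trans (Finset.sum_le_sum fun i _ => ?_)
    rw [Sc.nrm_smul]
    refine mul_le_mul (hB.hX i a b ⟨ha, hab, hbT⟩) ?_ (Sc.nrm_nonneg _ _) (by positivity)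
    refine (hB.growth a s ⟨ha, has.le, hsT⟩ _ ((hctrl i).y_mem a ha haT)).trans ?_
    have := hB.hy i a ha haT
    gcongr
  have h2 : Sc.nrm 0 (∑ i, ∑ j, XX b a i j • S s a (y' a i j)) ≤
      ∑ _i : Fin d, ∑ _j : Fin d, K * B * (K * D * K) := by
    refine (Sc.nrm_sum _ _ _).trans (Finset.sum_le_sum fun i _ => ?_)
    refine (Sc.nrm_sum _ _ _).trans (Finset.sum_le_sum fun j _ => ?_)
    rw [Sc.nrm_smul]
    refine mul_le_mul (hB.hXX i j a b ⟨ha, hab, hbT⟩) ?_ (Sc.nrm_nonneg _ _) (by positivity)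
    refine (hB.smooth1 a s ha has hsT _ ((hctrl i).y'_mem j a ha haT)).trans ?_
    have := hB.hy' i j a ha haT
    gcongr
  refine (Sc.nrm_add _ _ _).trans ((add_le_add h1 h2).trans ?_)
  simp only [Finset.sum_const, Finset.card_univ, Fintype.card_fin, nsmul_eq_mul]
  have q1 : 0 ≤ (d : ℝ) * d * K ^ 3 * A := by positivity
  have q2 : 0 ≤ (d : ℝ) * K ^ 3 * (B * D) := by positivity
  nlinarith [q1, q2]

/-- The coboundary of the germ, written as a propagated element of `B_{-2γ}`: Chen's relation and
the controlled structure leave only differences `(S_{m,a} - id)`, the remainder, and `δy'`. -/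
lemma germ_defect_eq (hS : IsPropagator Sc T L S) (hX : IsRoughPath 0 T γ X XX)
    {a m b τ : ℝ} (ha : 0 ≤ a) (ham : a ≤ m) (hmb : m ≤ b) (hbτ : b ≤ τ) (hτT : τ ≤ T) :
    S τ a (germ X XX y y' b a) - S τ a (germ X XX y y' m a) - S τ m (germ X XX y y' b m) =
      S τ m ((∑ i, (X b i - X m i) • ((S m a (y a i) - y a i)
          + (∑ j, (X m j - X a j) • (S m a (y' a i j) - y' a i j))
          - ctrlRem X (fun t => y t i) (fun t j => y' t i j) m a))
        + ∑ i, ∑ j, XX b m i j • ((S m a (y' a i j) - y' a i j) - (y' m i j - y' a i j))) := by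
  have hc : ∀ x, S τ a x = S τ m (S m a x) := fun x =>
    (hS.comp a m τ ⟨ha, ham, hmb.trans hbτ, hτT⟩ x).symm
  rw [hc, hc, ← map_sub, ← map_sub]
  congr 1
  have hchen : ∀ i j, XX b a i j = XX m a i j + XX b m i j + (X b i - X m i) * (X m j - X a j) :=
    fun i j => by
      have := hX.chen i j a m b ⟨ha, ham, hmb, hbτ.trans hτT⟩
      linarith
  simp only [germ, map_add, map_sum, map_smul, ctrlRem, hchen]
  simp only [← Finset.sum_add_distrib, ← Finset.sum_sub_distrib]
  refine Finset.sum_congr rfl fun i _ => ?_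
  simp only [smul_add, smul_sub, add_smul, sub_smul, mul_smul, Finset.smul_sum,
    Finset.sum_add_distrib, Finset.sum_sub_distrib]
  abel

lemma germ_defect_bound (hγ : 0 < γ) (hS : IsPropagator Sc T L S)
    (hX : IsRoughPath 0 T γ X XX) (hctrl : IsControlledVec Sc 0 T γ 0 X y y')
    (hB : Bounds Sc T γ S X XX y y' φ K) :
    ∃ C, 0 ≤ C ∧ ∀ a m b τ, 0 ≤ a → a ≤ m → m < b → b ≤ τ → τ ≤ T →
      Sc.nrm 0 (S τ a (germ X XX y y' b a) - S τ a (germ X XX y y' m a)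
        - S τ m (germ X XX y y' b m)) ≤ C * ((b - a) ^ (3 * γ) * (τ - m) ^ (-(2 * γ))) := by
  have hK := hB.nonneg
  refine ⟨K * (d * (K * (K * K + d * (K * (K * K)) + K)) + d * (d * (K * (K * K + K)))),
    by positivity, fun a m b τ ha ham hmb hbτ hτT => ?_⟩
  have haT : a ≤ T := by linarith
  have hmT : m ≤ T := by linarith
  have hab : 0 ≤ b - a := by linarith
  set A := (b - a) ^ γ with hA
  have hA0 : 0 ≤ A := Real.rpow_nonneg hab γ
  have hma : (m - a) ^ γ ≤ A := Real.rpow_le_rpow (by linarith) (by linarith) hγ.le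
  have hma0 : 0 ≤ (m - a) ^ γ := Real.rpow_nonneg (by linarith) γ
  have hbm : (b - m) ^ γ ≤ A := Real.rpow_le_rpow (by linarith) (by linarith) hγ.le
  have hbm0 : 0 ≤ (b - m) ^ γ := Real.rpow_nonneg (by linarith) γ
  have hma2 : (m - a) ^ (2 * γ) ≤ A * A := by
    rw [rpow_two_mul (by linarith) hγ]; gcongr
  have hbm2 : (b - m) ^ (2 * γ) ≤ A * A := by
    rw [rpow_two_mul (by linarith) hγ]; gcongr
  have hA3 : (b - a) ^ (3 * γ) = A * A * A := by
    rw [show 3 * γ = 2 * γ + γ by ring, Real.rpow_add_of_nonneg hab (by linarith) hγ.le,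
      rpow_two_mul hab hγ]
  have hD0 : 0 ≤ (τ - m) ^ (-(2 * γ)) := Real.rpow_nonneg (by linarith) _
  have m2 : Mem2 0 T a m := ⟨ha, ham, hmT⟩
  have m2' : Mem2 0 T m b := ⟨ha.trans ham, hmb.le, hbτ.trans hτT⟩
  have y_mem := fun i => (hctrl i).y_mem a ha haT
  have y'_mem := fun i j => (hctrl i).y'_mem j a ha haT
  have emb0 : Sc.carrier 0 ≤ Sc.carrier (0 - 2 * γ) := Sc.antitone (by linarith)
  have emb1 : Sc.carrier (0 - γ) ≤ Sc.carrier (0 - 2 * γ) := Sc.antitone (by linarith)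
  have y'd_mem : ∀ i j, S m a (y' a i j) - y' a i j ∈ Sc.carrier (0 - 2 * γ) := fun i j =>
    emb1 (Submodule.sub_mem _ (hS.mapsTo _ a m m2 _ (y'_mem i j)) (y'_mem i j))
  have R_mem : ∀ i, ctrlRem X (fun t => y t i) (fun t j => y' t i j) m a
      ∈ Sc.carrier (0 - 2 * γ) := fun i =>
    Submodule.sub_mem _ (Submodule.sub_mem _
      (emb0 ((hctrl i).y_mem m (ha.trans ham) hmT)) (emb0 (y_mem i)))
      (Submodule.sum_mem _ fun j _ => Submodule.smul_mem _ _ (emb1 (y'_mem i j)))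
  have bd' : ∀ i j, Sc.nrm (0 - 2 * γ) (S m a (y' a i j) - y' a i j) ≤ K * A * K := by
    intro i j
    refine (hB.id1 a m m2 _ (y'_mem i j)).trans ?_
    have := hB.hy' i j a ha haT
    have := Sc.nrm_nonneg (0 - γ) (y' a i j)
    gcongr
  rw [germ_defect_eq hS hX ha ham hmb.le hbτ hτT]
  refine (hB.smooth2 m τ (ha.trans ham) (hmb.trans_le hbτ) hτT _ ?_).trans ?_
  · refine Submodule.add_mem _ (Submodule.sum_mem _ fun i _ => Submodule.smul_mem _ _ ?_)
      (Submodule.sum_mem _ fun i _ => Submodule.sum_mem _ fun j _ => Submodule.smul_mem _ _ ?_)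
    · refine Submodule.sub_mem _ (Submodule.add_mem _ (emb0 (Submodule.sub_mem _
        (hS.mapsTo _ a m m2 _ (y_mem i)) (y_mem i)))
        (Submodule.sum_mem _ fun j _ => Submodule.smul_mem _ _ (y'd_mem i j))) (R_mem i)
    · exact Submodule.sub_mem _ (y'd_mem i j) (emb1 (Submodule.sub_mem _
        ((hctrl i).y'_mem j m (ha.trans ham) hmT) (y'_mem i j)))
  · have h1 : Sc.nrm (0 - 2 * γ) (∑ i, (X b i - X m i) • ((S m a (y a i) - y a i)
          + (∑ j, (X m j - X a j) • (S m a (y' a i j) - y' a i j))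
          - ctrlRem X (fun t => y t i) (fun t j => y' t i j) m a)) ≤
        ∑ _i : Fin d, K * A * (K * (A * A) * K + (∑ _j : Fin d, K * A * (K * A * K))
          + K * (A * A)) := by
      refine (Sc.nrm_sum _ _ _).trans (Finset.sum_le_sum fun i _ => ?_)
      rw [Sc.nrm_smul]
      refine mul_le_mul ((hB.hX i m b m2').trans (by gcongr)) ?_ (Sc.nrm_nonneg _ _)
        (by positivity)
      refine (Sc.nrm_sub _ _ _).trans (add_le_add ((Sc.nrm_add _ _ _).trans
        (add_le_add ?_ ?_)) ((hB.hR i a m m2).trans (by gcongr)))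
      · refine (hB.id2 a m m2 _ (y_mem i)).trans ?_
        have := hB.hy i a ha haT
        have := Sc.nrm_nonneg 0 (y a i)
        gcongr
      · refine (Sc.nrm_sum _ _ _).trans (Finset.sum_le_sum fun j _ => ?_)
        rw [Sc.nrm_smul]
        exact mul_le_mul ((hB.hX j a m m2).trans (by gcongr)) (bd' i j) (Sc.nrm_nonneg _ _)
          (by positivity)
    have h2 : Sc.nrm (0 - 2 * γ) (∑ i, ∑ j, XX b m i j •
          ((S m a (y' a i j) - y' a i j) - (y' m i j - y' a i j))) ≤
        ∑ _i : Fin d, ∑ _j : Fin d, K * (A * A) * (K * A * K + K * A) := by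
      refine (Sc.nrm_sum _ _ _).trans (Finset.sum_le_sum fun i _ => ?_)
      refine (Sc.nrm_sum _ _ _).trans (Finset.sum_le_sum fun j _ => ?_)
      rw [Sc.nrm_smul]
      refine mul_le_mul ((hB.hXX i j m b m2').trans (by gcongr)) ?_ (Sc.nrm_nonneg _ _)
        (by positivity)
      exact (Sc.nrm_sub _ _ _).trans (add_le_add (bd' i j)
        ((hB.hdy' i j a m m2).trans (by gcongr)))
    have h3 := (Sc.nrm_add _ _ _).trans (add_le_add h1 h2)
    refine (mul_le_mul_of_nonneg_left h3 (by positivity)).trans (le_of_eq ?_)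
    rw [hA3]
    simp only [Finset.sum_const, Finset.card_univ, Fintype.card_fin, nsmul_eq_mul]
    ring

end Germ

/-! ### Sewing along dyadic refinements -/

/-- The singular defect bound `h^{3γ} r^{-2γ}` is dominated by `h^κ` times the increment over
`[r - h/2, r + h/2]` of the function `x ↦ x^ρ`, where `κ = (3γ-1)/2` and `ρ = γ - κ`. Increments
are additive over partitions, so this makes the defects summable, also when `2γ = 1`. -/
lemma defect_scalar {γ h r : ℝ} (hγ₁ : 1/3 < γ) (hγ₂ : γ ≤ 1/2) (hh : 0 < h) (hr : h / 2 ≤ r) :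
    h ^ (3 * γ) * r ^ (-(2 * γ)) ≤
      16 * (h ^ ((3 * γ - 1) / 2) * ((r + h / 2) ^ ((1 - γ) / 2) - (r - h / 2) ^ ((1 - γ) / 2))) := by
  set κ := (3 * γ - 1) / 2 with hκ
  set ρ := (1 - γ) / 2 with hρ
  have hr0 : 0 < r := by linarith
  have hhκ : 0 < h ^ κ := Real.rpow_pos_of_pos hh κ
  have e1 : h ^ (3 * γ) * r ^ (-(2 * γ)) = (h / r) ^ κ * (h ^ κ * (h * r ^ (ρ - 1))) := by
    have e2 : h ^ (3 * γ) = h ^ κ * h ^ κ * h := by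
      rw [show 3 * γ = κ + κ + 1 by rw [hκ]; ring, Real.rpow_add hh, Real.rpow_add hh,
        Real.rpow_one]
    have e3 : r ^ (-(2 * γ)) = r ^ (ρ - 1) / r ^ κ := by
      rw [← Real.rpow_sub hr0]; congr 1; rw [hκ, hρ]; ring
    rw [e2, e3, Real.div_rpow hh.le hr0.le]
    ring
  have e2 : (h / r) ^ κ ≤ 2 := by
    have h2 : h / r ≤ 2 := by rw [div_le_iff₀ hr0]; linarith
    calc (h / r) ^ κ ≤ 2 ^ κ := Real.rpow_le_rpow (by positivity) h2 (by rw [hκ]; linarith)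
      _ ≤ 2 ^ (1 : ℝ) := Real.rpow_le_rpow_of_exponent_le (by norm_num) (by rw [hκ]; linarith)
      _ = 2 := Real.rpow_one 2
  -- Bernoulli's inequality `(1 - x)^ρ ≤ 1 - ρ x` with `x = h / (2 r)`
  have e3 : h * r ^ (ρ - 1) ≤ 8 * ((r + h / 2) ^ ρ - (r - h / 2) ^ ρ) := by
    have hρ4 : 1 / 4 ≤ ρ := by rw [hρ]; linarith
    have hx : h / 2 / r ≤ 1 := by rw [div_le_iff₀ hr0]; linarith
    have b := rpow_one_add_le_one_add_mul_self (s := -(h / 2 / r)) (p := ρ) (by linarith)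
      (by linarith) (by rw [hρ]; linarith)
    have b1 : (r - h / 2) ^ ρ = r ^ ρ * (1 + -(h / 2 / r)) ^ ρ := by
      rw [← Real.mul_rpow hr0.le (by linarith)]
      congr 1; field_simp; ring
    have b2 : r ^ ρ ≤ (r + h / 2) ^ ρ := Real.rpow_le_rpow hr0.le (by linarith) (by linarith)
    have b3 : r ^ ρ = r ^ (ρ - 1) * r := by
      rw [← Real.rpow_add_one hr0.ne']; congr 1; ring
    have b4 : 0 < r ^ (ρ - 1) := Real.rpow_pos_of_pos hr0 _
    have b5 : (r - h / 2) ^ ρ ≤ r ^ ρ - ρ * (r ^ (ρ - 1) * (h / 2)) := by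
      rw [b1]
      refine (mul_le_mul_of_nonneg_left b (Real.rpow_nonneg hr0.le _)).trans (le_of_eq ?_)
      rw [b3]; field_simp; ring
    have b6 : 1 / 4 * (r ^ (ρ - 1) * (h / 2)) ≤ ρ * (r ^ (ρ - 1) * (h / 2)) := by gcongr
    linarith
  have hi : 0 ≤ (r + h / 2) ^ ρ - (r - h / 2) ^ ρ := by
    have : 0 < h * r ^ (ρ - 1) := mul_pos hh (Real.rpow_pos_of_pos hr0 _)
    linarith
  rw [e1]
  calc (h / r) ^ κ * (h ^ κ * (h * r ^ (ρ - 1)))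
      ≤ 2 * (h ^ κ * (8 * ((r + h / 2) ^ ρ - (r - h / 2) ^ ρ))) := by
        have : 0 < h * r ^ (ρ - 1) := mul_pos hh (Real.rpow_pos_of_pos hr0 _)
        gcongr
    _ = _ := by ring

/-- Riemann sum of the two-parameter function `Ξ` over the `n`-th dyadic partition of `[a,b]`. -/
noncomputable def dyadicSum (Ξ : ℝ → ℝ → E) : ℕ → ℝ → ℝ → E
  | 0, a, b => Ξ a b
  | n + 1, a, b => dyadicSum Ξ n a ((a + b) / 2) + dyadicSum Ξ n ((a + b) / 2) b

/-- Sewing estimate: if the midpoint defects of `Ξ` are at most `C (b-a)^κ (f b - f a)` with `κ > 0`,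
then all dyadic sums stay close to the germ; halving the intervals gains a factor `2^{-κ} < 1` while
the increments of `f` add up, so the defects of the successive levels form a geometric series. -/
lemma dyadicSum_sub_zero (Sc : Scale E) {β C κ τ : ℝ} (hκ : 0 < κ) {Ξ : ℝ → ℝ → E} {f : ℝ → ℝ}
    (hΞ : ∀ a b, 0 ≤ a → a < b → b ≤ τ →
      Sc.nrm β (Ξ a b - Ξ a ((a + b) / 2) - Ξ ((a + b) / 2) b) ≤ C * ((b - a) ^ κ * (f b - f a)))
    (n : ℕ) : ∀ a b, 0 ≤ a → a < b → b ≤ τ →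
      Sc.nrm β (dyadicSum Ξ n a b - Ξ a b) ≤
        C / (1 - 2⁻¹ ^ κ) * ((b - a) ^ κ * (f b - f a)) := by
  have hq : (2⁻¹ : ℝ) ^ κ < 1 := Real.rpow_lt_one (by norm_num) (by norm_num) hκ
  induction n with
  | zero =>
    intro a b ha hab hb
    have h0 := (Sc.nrm_nonneg _ _).trans (hΞ a b ha hab hb)
    have : 1 ≤ 1 / (1 - (2⁻¹ : ℝ) ^ κ) := by
      rw [le_div_iff₀ (by linarith)]
      have : 0 ≤ (2⁻¹ : ℝ) ^ κ := by positivity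
      linarith
    simp only [dyadicSum, sub_self, Sc.nrm_zero]
    calc 0 ≤ (1 / (1 - (2⁻¹ : ℝ) ^ κ)) * (C * ((b - a) ^ κ * (f b - f a))) := by positivity
      _ = _ := by ring
  | succ n ih =>
    intro a b ha hab hb
    set m := (a + b) / 2 with hm
    have h1 := ih a m ha (by linarith) (by linarith)
    have h2 := ih m b (by linarith) (by linarith) hb
    have h3 := hΞ a b ha hab hb
    have hma : (m - a) ^ κ = 2⁻¹ ^ κ * (b - a) ^ κ := by
      rw [← Real.mul_rpow (by norm_num) (by linarith)]; congr 1; rw [hm]; ring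
    have hbm : (b - m) ^ κ = 2⁻¹ ^ κ * (b - a) ^ κ := by
      rw [← Real.mul_rpow (by norm_num) (by linarith)]; congr 1; rw [hm]; ring
    rw [hma] at h1
    rw [hbm] at h2
    have e : dyadicSum Ξ (n + 1) a b - Ξ a b = (dyadicSum Ξ n a m - Ξ a m)
        + (dyadicSum Ξ n m b - Ξ m b) - (Ξ a b - Ξ a m - Ξ m b) := by
      simp only [dyadicSum, ← hm]; abel
    rw [e]
    refine (Sc.nrm_sub _ _ _).trans ((add_le_add ((Sc.nrm_add _ _ _).trans (add_le_add h1 h2))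
      h3).trans (le_of_eq ?_))
    have : 1 - (2⁻¹ : ℝ) ^ κ ≠ 0 := by linarith
    generalize (2⁻¹ : ℝ) ^ κ = q at this ⊢
    field_simp
    ring

lemma dyadicSum_cauchy (Sc : Scale E) {β C κ τ : ℝ} (hκ : 0 < κ) {Ξ : ℝ → ℝ → E} {f : ℝ → ℝ}
    (hΞ : ∀ a b, 0 ≤ a → a < b → b ≤ τ →
      Sc.nrm β (Ξ a b - Ξ a ((a + b) / 2) - Ξ ((a + b) / 2) b) ≤ C * ((b - a) ^ κ * (f b - f a)))
    (n l : ℕ) : ∀ a b, 0 ≤ a → a < b → b ≤ τ →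
      Sc.nrm β (dyadicSum Ξ (n + l) a b - dyadicSum Ξ n a b) ≤
        C / (1 - 2⁻¹ ^ κ) * (2⁻¹ ^ κ) ^ n * ((b - a) ^ κ * (f b - f a)) := by
  induction n with
  | zero => simpa [dyadicSum] using dyadicSum_sub_zero Sc hκ hΞ l
  | succ n ih =>
    intro a b ha hab hb
    set m := (a + b) / 2 with hm
    have h1 := ih a m ha (by linarith) (by linarith)
    have h2 := ih m b (by linarith) (by linarith) hb
    have hma : (m - a) ^ κ = 2⁻¹ ^ κ * (b - a) ^ κ := by
      rw [← Real.mul_rpow (by norm_num) (by linarith)]; congr 1; rw [hm]; ring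
    have hbm : (b - m) ^ κ = 2⁻¹ ^ κ * (b - a) ^ κ := by
      rw [← Real.mul_rpow (by norm_num) (by linarith)]; congr 1; rw [hm]; ring
    rw [hma] at h1
    rw [hbm] at h2
    have e : dyadicSum Ξ (n + 1 + l) a b - dyadicSum Ξ (n + 1) a b =
        (dyadicSum Ξ (n + l) a m - dyadicSum Ξ n a m)
        + (dyadicSum Ξ (n + l) m b - dyadicSum Ξ n m b) := by
      rw [show n + 1 + l = (n + l) + 1 by ring]
      simp only [dyadicSum, ← hm]; abel
    rw [e]
    refine (Sc.nrm_add _ _ _).trans ((add_le_add h1 h2).trans (le_of_eq ?_))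
    ring

/-- `z` is the Riemann sum of `Ξ` over some partition of `[a,b]` of mesh at most `δ`. -/
def IsSumOver {F : Type*} [AddCommGroup F] (Ξ : ℝ → ℝ → F) (a b δ : ℝ) (z : F) : Prop :=
  ∃ k p, IsPartition a b k p ∧ MeshLE k p δ ∧ ∑ j ∈ Finset.range k, Ξ (p j) (p (j + 1)) = z

lemma IsSumOver.concat {F : Type*} [AddCommGroup F] {Ξ : ℝ → ℝ → F} {a b c δ : ℝ} {z w : F}
    (h₁ : IsSumOver Ξ a b δ z) (h₂ : IsSumOver Ξ b c δ w) : IsSumOver Ξ a c δ (z + w) := by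
  obtain ⟨k, p, hp, hpδ, rfl⟩ := h₁
  obtain ⟨l, q, hq, hqδ, rfl⟩ := h₂
  set r : ℕ → ℝ := fun i => if i ≤ k then p i else q (i - k) with hr
  have rp : ∀ i ≤ k, r i = p i := fun i hi => by simp [hr, hi]
  have rq : ∀ i, r (k + i) = q i := fun i => by
    rcases Nat.eq_zero_or_pos i with rfl | hi
    · simp [hr, hp.last, hq.first]
    · have : ¬ k + i ≤ k := by omega
      simp [hr, this]
  have key : ∀ i < k + l, (∃ j < k, r i = p j ∧ r (i + 1) = p (j + 1)) ∨
      (∃ j < l, r i = q j ∧ r (i + 1) = q (j + 1)) := by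
    intro i hi
    rcases lt_or_ge i k with h | h
    · exact Or.inl ⟨i, h, rp i h.le, rp (i + 1) h⟩
    · obtain ⟨j, rfl⟩ := Nat.exists_eq_add_of_le h
      exact Or.inr ⟨j, by omega, rq j, by rw [add_assoc]; exact rq (j + 1)⟩
  refine ⟨k + l, r, ⟨?_, ?_, ?_, ?_⟩, ?_, ?_⟩
  · have := hp.pos; omega
  · rw [rp 0 (Nat.zero_le _), hp.first]
  · rw [rq, hq.last]
  · intro i hi
    rcases key i hi with ⟨j, hj, e1, e2⟩ | ⟨j, hj, e1, e2⟩ <;> rw [e1, e2]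
    · exact hp.mono j hj
    · exact hq.mono j hj
  · intro i hi
    rcases key i hi with ⟨j, hj, e1, e2⟩ | ⟨j, hj, e1, e2⟩ <;> rw [e1, e2]
    · exact hpδ j hj
    · exact hqδ j hj
  · rw [Finset.sum_range_add]
    congr 1
    · refine Finset.sum_congr rfl fun j hj => ?_
      have hj := Finset.mem_range.1 hj
      rw [rp j hj.le, rp (j + 1) hj]
    · refine Finset.sum_congr rfl fun j _ => ?_
      rw [rq j, add_assoc, rq (j + 1)]

lemma isSumOver_dyadicSum {F : Type*} [AddCommGroup F] (Ξ : ℝ → ℝ → F) (n : ℕ) : ∀ a b δ : ℝ, a < b → b - a ≤ δ →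
    IsSumOver Ξ a b (δ / 2 ^ n) (dyadicSum Ξ n a b) := by
  induction n with
  | zero =>
    intro a b δ hab hδ
    refine ⟨1, fun i => if i = 0 then a else b, ⟨one_pos, by simp, by simp, ?_⟩, ?_, ?_⟩
    · intro i hi
      obtain rfl : i = 0 := by omega
      simpa using hab
    · intro i hi
      obtain rfl : i = 0 := by omega
      simpa using hδ
    · simp [dyadicSum]
  | succ n ih =>
    intro a b δ hab hδ
    have h1 := ih a ((a + b) / 2) (δ / 2) (by linarith) (by linarith)
    have h2 := ih ((a + b) / 2) b (δ / 2) (by linarith) (by linarith)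
    rw [show δ / 2 ^ (n + 1) = δ / 2 / 2 ^ n by rw [pow_succ]; field_simp]
    exact h1.concat h2

lemma isSumOver_sum_dyadicSum {F : Type*} [AddCommGroup F] (Ξ : ℝ → ℝ → F) (n : ℕ)
    {a b δ : ℝ} {k : ℕ} {p : ℕ → ℝ}
    (hp : IsPartition a b k p) (hδ : MeshLE k p δ) :
    IsSumOver Ξ a b (δ / 2 ^ n)
      (∑ j ∈ Finset.range k, dyadicSum Ξ n (p j) (p (j + 1))) := by
  have key : ∀ m < k, IsSumOver Ξ a (p (m + 1)) (δ / 2 ^ n)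
      (∑ j ∈ Finset.range (m + 1), dyadicSum Ξ n (p j) (p (j + 1))) := by
    intro m
    induction m with
    | zero =>
      intro h
      have := isSumOver_dyadicSum Ξ n _ _ δ (hp.mono 0 h) (hδ 0 h)
      rw [hp.first] at this
      simpa [hp.first] using this
    | succ m ih =>
      intro h
      rw [Finset.sum_range_succ]
      exact (ih (by omega)).concat (isSumOver_dyadicSum Ξ n _ _ δ (hp.mono _ h) (hδ _ h))
  have := key (k - 1) (by have := hp.pos; omega)
  rwa [Nat.sub_add_cancel hp.pos, hp.last] at this

lemma IsPartition.le {a b : ℝ} {k : ℕ} {p : ℕ → ℝ} (hp : IsPartition a b k p) {i j : ℕ}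
    (hij : i ≤ j) (hj : j ≤ k) : p i ≤ p j := by
  induction j, hij using Nat.le_induction with
  | base => exact le_rfl
  | succ j _ ih => exact (ih (by omega)).trans (hp.mono j (by omega)).le

lemma IsPartition.left_le {a b : ℝ} {k : ℕ} {p : ℕ → ℝ} (hp : IsPartition a b k p) {i : ℕ}
    (hi : i ≤ k) : a ≤ p i := hp.first ▸ hp.le (Nat.zero_le i) hi

lemma IsPartition.le_right {a b : ℝ} {k : ℕ} {p : ℕ → ℝ} (hp : IsPartition a b k p) {i : ℕ}
    (hi : i ≤ k) : p i ≤ b := hp.last ▸ hp.le hi le_rfl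

/-! ### Uniform convergence of the compensated sums in `B₀` -/

section Conv

variable {Sc : Scale E} {T γ : ℝ} {L : ℝ → E →ₗ[ℝ] E} {S : ℝ → ℝ → E →ₗ[ℝ] E}
  {d : ℕ} {X : ℝ → Fin d → ℝ} {XX : ℝ → ℝ → Fin d → Fin d → ℝ}
  {y : ℝ → Fin d → E} {y' : ℝ → Fin d → Fin d → E} {φ : ℝ → E →ₗ[ℝ] ℝ} {K : ℝ}

open Filter Topology in
/-- A sequence that is Cauchy in `B_β` with geometric rate and converges to `z` in a weaker level
`B_α` converges to `z` in `B_β`, with the corresponding bound for its first term. -/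
lemma nrm_sub_limit_le (Sc : Scale E) {α β M q : ℝ} (hαβ : α ≤ β) (hq0 : 0 ≤ q)
    (hq1 : q < 1) {u : ℕ → E} {z : E} (hu : ∀ n, u n ∈ Sc.carrier β) (hz : z ∈ Sc.carrier α)
    (hcau : ∀ n l, Sc.nrm β (u (n + l) - u n) ≤ M * q ^ n)
    (hlim : Tendsto (fun n => Sc.nrm α (u n - z)) atTop (𝓝 0)) :
    Sc.nrm β (u 0 - z) ≤ M := by
  have hsymm : ∀ (β : ℝ) (v w : E), Sc.nrm β (v - w) = Sc.nrm β (w - v) := fun β v w => by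
    rw [← neg_sub, Sc.nrm_neg]
  have hMq : Tendsto (fun n => M * q ^ n) atTop (𝓝 0) := by
    simpa using (tendsto_pow_atTop_nhds_zero_of_lt_one hq0 hq1).const_mul M
  obtain ⟨x, hx, hux⟩ := Sc.complete β u hu (by
    intro ε hε
    obtain ⟨N, hN⟩ := (hMq.eventually (gt_mem_nhds (half_pos hε))).exists
    refine ⟨N, fun m hm n hn => ?_⟩
    obtain ⟨a, rfl⟩ := Nat.exists_eq_add_of_le hm
    obtain ⟨b, rfl⟩ := Nat.exists_eq_add_of_le hn
    have h := Sc.nrm_sub β (u (N + a) - u N) (u (N + b) - u N)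
    rw [sub_sub_sub_cancel_right] at h
    linarith [hcau N a, hcau N b])
  have hxz : x = z := by
    have h1 : Tendsto (fun n => Sc.embConst α β * Sc.nrm β (u n - x) + Sc.nrm α (u n - z))
        atTop (𝓝 0) := by
      simpa using (hux.const_mul (Sc.embConst α β)).add hlim
    have h2 : Sc.nrm α (x - z) ≤ 0 := by
      refine ge_of_tendsto' h1 fun n => ?_
      have h := Sc.nrm_sub α (u n - z) (u n - x)
      rw [sub_sub_sub_cancel_left] at h
      linarith [Sc.emb_le hαβ _ (Submodule.sub_mem _ (hu n) hx)]
    have h3 := Sc.eq_zero_of_nrm α (x - z)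
      (Submodule.sub_mem _ (Sc.antitone hαβ hx) hz) (le_antisymm h2 (Sc.nrm_nonneg _ _))
    exact sub_eq_zero.1 h3
  subst hxz
  have h1 : Tendsto (fun n => M + Sc.nrm β (u n - x)) atTop (𝓝 M) := by
    simpa using hux.const_add M
  refine ge_of_tendsto' h1 fun n => ?_
  have h := Sc.nrm_sub β (u n - x) (u n - u 0)
  rw [sub_sub_sub_cancel_left] at h
  have h2 := hcau 0 n
  simp only [Nat.zero_add, pow_zero, mul_one] at h2
  linarith

open Filter Topology in
/-- The compensated sums converge to the rough convolution in `B₀`, uniformly in time: the error is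
controlled by a power of the mesh. -/
lemma convSum_close (hγ₁ : 1/3 < γ) (hγ₂ : γ ≤ 1/2) (hS : IsPropagator Sc T L S)
    (hX : IsRoughPath 0 T γ X XX) (hctrl : IsControlledVec Sc 0 T γ 0 X y y')
    (hB : Bounds Sc T γ S X XX y y' φ K)
    {Z : ℝ → E} (hZ : IsRoughConv Sc T (0 - 2 * γ) S X XX y y' Z)
    (hZmem : ∀ t, 0 ≤ t → t ≤ T → Z t ∈ Sc.carrier 0) :
    ∃ C, 0 ≤ C ∧ ∀ τ, 0 < τ → τ ≤ T → ∀ k p δ, 0 ≤ δ → IsPartition 0 τ k p → MeshLE k p δ →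
      Sc.nrm 0 (convSum S X XX y y' τ k p - Z τ) ≤ C * δ ^ ((3 * γ - 1) / 2) := by
  have hγ : 0 < γ := by linarith
  obtain ⟨C₀, hC₀, hdef⟩ := germ_defect_bound hγ hS hX hctrl hB
  set κ := (3 * γ - 1) / 2 with hκdef
  set ρ := (1 - γ) / 2 with hρdef
  have hκ : 0 < κ := by rw [hκdef]; linarith
  have hρ : 0 < ρ := by rw [hρdef]; linarith
  set q : ℝ := 2⁻¹ ^ κ with hq
  have hq0 : 0 ≤ q := by rw [hq]; positivity
  have hq1 : q < 1 := Real.rpow_lt_one (by norm_num) (by norm_num) hκ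
  have hC1 : 0 ≤ C₀ * 16 / (1 - q) := div_nonneg (by positivity) (by linarith)
  rcases lt_or_ge T 0 with hT | hT
  · exact ⟨0, le_rfl, fun τ h1 h2 => by linarith⟩
  refine ⟨C₀ * 16 / (1 - q) * T ^ ρ, mul_nonneg hC1 (Real.rpow_nonneg hT _),
    fun τ hτ hτT k p δ hδ hp hmesh => ?_⟩
  set Ξ : ℝ → ℝ → E := fun a b => S τ a (germ X XX y y' b a) with hΞ
  set f : ℝ → ℝ := fun r => -(τ - r) ^ ρ with hf
  have hdefect : ∀ a b, 0 ≤ a → a < b → b ≤ τ →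
      Sc.nrm 0 (Ξ a b - Ξ a ((a + b) / 2) - Ξ ((a + b) / 2) b) ≤
        C₀ * 16 * ((b - a) ^ κ * (f b - f a)) := by
    intro a b ha hab hb
    refine (hdef a ((a + b) / 2) b τ ha (by linarith) (by linarith) hb hτT).trans ?_
    have h := defect_scalar (h := b - a) (r := τ - (a + b) / 2) hγ₁ hγ₂ (by linarith)
      (by linarith)
    rw [show τ - (a + b) / 2 + (b - a) / 2 = τ - a by ring,
      show τ - (a + b) / 2 - (b - a) / 2 = τ - b by ring] at h
    refine (mul_le_mul_of_nonneg_left h hC₀).trans (le_of_eq ?_)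
    simp only [hf]
    ring
  have hmem : ∀ n a b, 0 ≤ a → a < b → b ≤ τ → dyadicSum Ξ n a b ∈ Sc.carrier 0 := by
    intro n
    induction n with
    | zero =>
      intro a b ha hab hb
      obtain ⟨_, h⟩ := hS.smoothing (0 - γ) 0 (by linarith)
      exact (h a τ ha (by linarith) hτT _ (germ_mem hγ hctrl ha (by linarith))).1
    | succ n ih =>
      intro a b ha hab hb
      exact Submodule.add_mem _ (ih _ _ ha (by linarith) (by linarith))
        (ih _ _ (by linarith) (by linarith) hb)
  have hp0 : ∀ j < k, 0 ≤ p j := fun j hj => hp.left_le hj.le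
  have hpτ : ∀ j < k, p (j + 1) ≤ τ := fun j hj => hp.le_right hj
  have hu0 : convSum S X XX y y' τ k p
      = ∑ j ∈ Finset.range k, dyadicSum Ξ 0 (p j) (p (j + 1)) := rfl
  rw [hu0]
  refine nrm_sub_limit_le Sc (α := 0 - 2 * γ) (q := q)
    (u := fun n => ∑ j ∈ Finset.range k, dyadicSum Ξ n (p j) (p (j + 1))) (by linarith) hq0 hq1
    ?_ ?_ ?_ ?_
  · exact fun n => Submodule.sum_mem _ fun j hj => by
      have hj := Finset.mem_range.1 hj
      exact hmem n _ _ (hp0 j hj) (hp.mono j hj) (hpτ j hj)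
  · exact Sc.antitone (by linarith) (hZmem τ hτ.le hτT)
  · intro n l
    rw [← Finset.sum_sub_distrib]
    calc _ ≤ ∑ j ∈ Finset.range k, C₀ * 16 / (1 - q) * q ^ n * (δ ^ κ * (f (p (j + 1)) - f (p j))) := by
            refine (Sc.nrm_sum _ _ _).trans (Finset.sum_le_sum fun j hj => ?_)
            have hj := Finset.mem_range.1 hj
            refine (dyadicSum_cauchy Sc hκ hdefect n l _ _ (hp0 j hj) (hp.mono j hj)
              (hpτ j hj)).trans ?_
            have h1 : (p (j + 1) - p j) ^ κ ≤ δ ^ κ :=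
              Real.rpow_le_rpow (sub_nonneg.2 (hp.mono j hj).le) (hmesh j hj) hκ.le
            have h2 : 0 ≤ f (p (j + 1)) - f (p j) := by
              have : (τ - p (j + 1)) ^ ρ ≤ (τ - p j) ^ ρ := Real.rpow_le_rpow
                (sub_nonneg.2 (hpτ j hj)) (by linarith [hp.mono j hj]) hρ.le
              simp only [hf]; linarith
            gcongr
      _ = C₀ * 16 / (1 - q) * q ^ n * (δ ^ κ * τ ^ ρ) := by
            rw [← Finset.mul_sum, ← Finset.mul_sum, Finset.sum_range_sub (fun j => f (p j))]
            simp [hf, hp.first, hp.last, Real.zero_rpow hρ.ne']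
      _ ≤ C₀ * 16 / (1 - q) * q ^ n * (δ ^ κ * T ^ ρ) := by
            have : 0 ≤ δ ^ κ := Real.rpow_nonneg hδ _
            gcongr
      _ = _ := by ring
  · rw [Metric.tendsto_atTop]
    intro ε hε
    obtain ⟨η, hη, hZη⟩ := hZ.2 τ hτ hτT ε hε
    have h0 : Tendsto (fun n : ℕ => δ / 2 ^ n) atTop (𝓝 0) := by
      have := (tendsto_pow_atTop_nhds_zero_of_lt_one (r := (2⁻¹ : ℝ)) (by norm_num)
        (by norm_num)).const_mul δ
      simpa [div_eq_mul_inv] using this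
    obtain ⟨N, hN⟩ := eventually_atTop.1 (h0.eventually (gt_mem_nhds hη))
    refine ⟨N, fun n hn => ?_⟩
    obtain ⟨k', p', hp', hm', he⟩ := isSumOver_sum_dyadicSum Ξ n hp hmesh
    have h := hZη k' p' hp' fun i hi => (hm' i hi).trans (hN n hn).le
    have he' : convSum S X XX y y' τ k' p'
      = ∑ j ∈ Finset.range k, dyadicSum Ξ n (p j) (p (j + 1)) := he
    rw [he'] at h
    rw [Real.dist_eq, sub_zero, abs_of_nonneg (Sc.nrm_nonneg _ _)]
    exact h

end Conv

/-! ### Pairing with the functionals and exchanging the sums with the time integral -/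

section Pairing

open MeasureTheory Set Filter Topology

variable {Sc : Scale E} {T γ : ℝ} {L : ℝ → E →ₗ[ℝ] E} {S : ℝ → ℝ → E →ₗ[ℝ] E}
  {d : ℕ} {X : ℝ → Fin d → ℝ} {XX : ℝ → ℝ → Fin d → Fin d → ℝ}
  {y : ℝ → Fin d → E} {y' : ℝ → Fin d → Fin d → E} {φ : ℝ → E →ₗ[ℝ] ℝ} {K : ℝ}

lemma pairing_continuousOn (hS : IsPropagator Sc T L S)
    (hB : Bounds Sc T γ S X XX y y' φ K)
    (hφcont : ∀ t, 0 ≤ t → t ≤ T → ∀ ε > (0:ℝ), ∃ δ > (0:ℝ), ∀ t', 0 ≤ t' → t' ≤ T →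
      |t' - t| < δ → ∀ v ∈ Sc.carrier 0, |φ t' v - φ t v| ≤ ε * Sc.nrm 0 v)
    {r : ℝ} (hr : 0 ≤ r) {x : E} (hx : x ∈ Sc.carrier 0) :
    ContinuousOn (fun s => φ s (S s r x)) (Icc r T) := by
  have hK := hB.nonneg
  rw [Metric.continuousOn_iff]
  intro s hs ε hε
  set N := Sc.nrm 0 (S s r x) with hN
  have hN0 : 0 ≤ N := Sc.nrm_nonneg _ _
  have m0 : Mem2 0 T r s := ⟨hr, hs.1, hs.2⟩
  obtain ⟨δ₁, hδ₁, h₁⟩ := hS.strong_cont 0 x hx r s m0 (ε / 2 / (K + 1)) (by positivity)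
  obtain ⟨δ₂, hδ₂, h₂⟩ := hφcont s (hr.trans hs.1) hs.2 (ε / 2 / (N + 1)) (by positivity)
  refine ⟨min δ₁ δ₂, lt_min hδ₁ hδ₂, fun s' hs' hd => ?_⟩
  rw [Real.dist_eq] at hd ⊢
  have m1 : Mem2 0 T r s' := ⟨hr, hs'.1, hs'.2⟩
  have a1 := h₁ r s' m1 (by simpa using hδ₁) (hd.trans_le (min_le_left _ _))
  have a2 := h₂ s' (hr.trans hs'.1) hs'.2 (hd.trans_le (min_le_right _ _)) _
    (hS.mapsTo 0 r s m0 x hx)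
  have a3 := hB.hφ s' (hr.trans hs'.1) hs'.2 _
    (Submodule.sub_mem _ (hS.mapsTo 0 r s' m1 x hx) (hS.mapsTo 0 r s m0 x hx))
  have e : φ s' (S s' r x) - φ s (S s r x) =
      φ s' (S s' r x - S s r x) + (φ s' (S s r x) - φ s (S s r x)) := by
    rw [map_sub]; ring
  rw [e]
  refine (abs_add_le _ _).trans_lt ?_
  have b1 : K * Sc.nrm 0 (S s' r x - S s r x) ≤ K * (ε / 2 / (K + 1)) := by gcongr
  have b2 : K * (ε / 2 / (K + 1)) < ε / 2 := by
    rw [mul_div_assoc', div_lt_iff₀ (by positivity)]; nlinarith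
  have b3 : ε / 2 / (N + 1) * N ≤ ε / 2 := by
    rw [div_mul_eq_mul_div, div_le_iff₀ (by positivity)]; nlinarith
  linarith

lemma intervalIntegrable_sub_rpow {γ : ℝ} (hγ : γ < 1) (r a b : ℝ) :
    IntervalIntegrable (fun s => (s - r) ^ (-γ)) volume a b := by
  have := (intervalIntegral.intervalIntegrable_rpow' (a := a - r) (b := b - r) (r := -γ)
    (by linarith)).comp_sub_right r
  simpa using this

lemma pairing_intervalIntegrable (hγ₀ : 0 < γ) (hγ : γ < 1) (hS : IsPropagator Sc T L S)
    (hB : Bounds Sc T γ S X XX y y' φ K)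
    (hφcont : ∀ t, 0 ≤ t → t ≤ T → ∀ ε > (0:ℝ), ∃ δ > (0:ℝ), ∀ t', 0 ≤ t' → t' ≤ T →
      |t' - t| < δ → ∀ v ∈ Sc.carrier 0, |φ t' v - φ t v| ≤ ε * Sc.nrm 0 v)
    {r t : ℝ} (hr : 0 ≤ r) (hrt : r ≤ t) (htT : t ≤ T) {x : E} (hx : x ∈ Sc.carrier (0 - γ)) :
    IntervalIntegrable (fun s => φ s (S s r x)) volume r t := by
  have hK := hB.nonneg
  obtain ⟨_, hsm⟩ := hS.smoothing (0 - γ) 0 (by linarith)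
  have hc : ContinuousOn (fun s => φ s (S s r x)) (Ioc r t) := by
    intro s hs
    set u := (r + s) / 2 with hu
    have hru : r < u := by linarith [hs.1]
    have hus : u < s := by linarith [hs.1]
    have h1 := pairing_continuousOn hS hB hφcont (hr.trans hru.le)
      (hsm r u hr hru (by linarith [hs.2]) x hx).1
    have h2 : ContinuousOn (fun s => φ s (S s r x)) (Icc u T) := h1.congr fun v hv => by
      change φ v (S v r x) = φ v (S v u (S u r x))
      rw [hS.comp r u v ⟨hr, hru.le, hv.1, hv.2⟩]
    refine (h2 s ⟨hus.le, hs.2.trans htT⟩).mono_of_mem_nhdsWithin ?_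
    filter_upwards [self_mem_nhdsWithin, mem_nhdsWithin_of_mem_nhds (lt_mem_nhds hus)]
      with v hv huv using ⟨huv.le, hv.2.trans htT⟩
  have hg : IntervalIntegrable (fun s => K * (K * (s - r) ^ (-γ) * Sc.nrm (0 - γ) x))
      volume r t :=
    (((intervalIntegrable_sub_rpow hγ r r t).const_mul K).mul_const _).const_mul K
  refine hg.mono_fun ?_ ?_
  · rw [uIoc_of_le hrt]
    exact hc.aestronglyMeasurable measurableSet_Ioc
  · rw [uIoc_of_le hrt]
    refine (ae_restrict_mem measurableSet_Ioc).mono fun s hs => ?_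
    refine le_trans ?_ (Real.le_norm_self _)
    change ‖φ s (S s r x)‖ ≤ _
    rw [Real.norm_eq_abs]
    refine (hB.hφ s (hr.trans hs.1.le) (hs.2.trans htT) _
      (hsm r s hr hs.1 (hs.2.trans htT) x hx).1).trans ?_
    have := hB.smooth1 r s hr hs.1 (hs.2.trans htT) x hx
    gcongr

/-- One summand of the finite-dimensional rough sum is the time integral of the paired germ. -/
lemma rough_summand_eq (hγ₀ : 0 < γ) (hγ : γ < 1) (hS : IsPropagator Sc T L S)
    (hctrl : IsControlledVec Sc 0 T γ 0 X y y')
    (hB : Bounds Sc T γ S X XX y y' φ K)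
    (hφcont : ∀ t, 0 ≤ t → t ≤ T → ∀ ε > (0:ℝ), ∃ δ > (0:ℝ), ∀ t', 0 ≤ t' → t' ≤ T →
      |t' - t| < δ → ∀ v ∈ Sc.carrier 0, |φ t' v - φ t v| ≤ ε * Sc.nrm 0 v)
    {a t : ℝ} (b : ℝ) (ha : 0 ≤ a) (hat : a ≤ t) (htT : t ≤ T) :
    (∑ i, (∫ s in a..t, φ s (S s a (y a i))) * (X b i - X a i))
      + ∑ i, ∑ i', (∫ s in a..t, φ s (S s a (y' a i i'))) * XX b a i i'
    = ∫ s in a..t, φ s (S s a (germ X XX y y' b a)) := by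
  have i1 : ∀ i, IntervalIntegrable (fun s => φ s (S s a (y a i))) volume a t := fun i =>
    pairing_intervalIntegrable hγ₀ hγ hS hB hφcont ha hat htT
      (Sc.antitone (by linarith) ((hctrl i).y_mem a ha (hat.trans htT)))
  have i2 : ∀ i j, IntervalIntegrable (fun s => φ s (S s a (y' a i j))) volume a t := fun i j =>
    pairing_intervalIntegrable hγ₀ hγ hS hB hφcont ha hat htT
      ((hctrl i).y'_mem j a ha (hat.trans htT))
  have j2 : ∀ i, IntervalIntegrable (fun s => ∑ j, XX b a i j * φ s (S s a (y' a i j)))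
      volume a t := fun i => by
    have := IntervalIntegrable.sum Finset.univ fun j (_ : j ∈ Finset.univ) =>
      (i2 i j).const_mul (XX b a i j)
    simpa [Finset.sum_fn] using this
  have k1 : IntervalIntegrable (fun s => ∑ i, (X b i - X a i) * φ s (S s a (y a i)))
      volume a t := by
    have := IntervalIntegrable.sum Finset.univ fun i (_ : i ∈ Finset.univ) =>
      (i1 i).const_mul (X b i - X a i)
    simpa [Finset.sum_fn] using this
  have k2 : IntervalIntegrable (fun s => ∑ i, ∑ j, XX b a i j * φ s (S s a (y' a i j)))
      volume a t := by
    have := IntervalIntegrable.sum Finset.univ fun i (_ : i ∈ Finset.univ) => j2 i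
    simpa [Finset.sum_fn] using this
  simp only [germ, map_add, map_sum, map_smul, smul_eq_mul]
  rw [intervalIntegral.integral_add k1 k2,
    intervalIntegral.integral_finsetSum fun i _ => (i1 i).const_mul _,
    intervalIntegral.integral_finsetSum fun i _ => j2 i]
  congr 1
  · refine Finset.sum_congr rfl fun i _ => ?_
    rw [intervalIntegral.integral_const_mul, mul_comm]
  · refine Finset.sum_congr rfl fun i _ => ?_
    rw [intervalIntegral.integral_finsetSum fun j _ => (i2 i j).const_mul _]
    refine Finset.sum_congr rfl fun j _ => ?_
    rw [intervalIntegral.integral_const_mul, mul_comm]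

lemma exists_mem_partition {t s : ℝ} {k : ℕ} {p : ℕ → ℝ} (hp : IsPartition 0 t k p)
    (hs : s ∈ Ioc 0 t) : ∃ m < k, p m < s ∧ s ≤ p (m + 1) := by
  classical
  have hex : ∃ i, s ≤ p i := ⟨k, hp.last ▸ hs.2⟩
  have h1 := Nat.find_spec hex
  have hk : Nat.find hex ≤ k := Nat.find_min' hex (hp.last ▸ hs.2)
  obtain ⟨m, hm⟩ : ∃ m, Nat.find hex = m + 1 := by
    refine Nat.exists_eq_succ_of_ne_zero fun h => ?_
    rw [h, hp.first] at h1
    exact absurd hs.1 (not_lt.2 h1)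
  refine ⟨m, by omega, not_le.1 (Nat.find_min hex (by omega)), by rwa [← hm]⟩

/-- The integral of a paired germ over its own subinterval is of order `(b-a)^{1+γ}`. -/
lemma local_term_bound (hγ₀ : 0 < γ) (hγ₂ : γ ≤ 1/2) (hS : IsPropagator Sc T L S)
    (hctrl : IsControlledVec Sc 0 T γ 0 X y y')
    (hB : Bounds Sc T γ S X XX y y' φ K) {M : ℝ} (hM0 : 0 ≤ M)
    (hM : ∀ a b s, 0 ≤ a → a ≤ b → b ≤ T → a < s → s ≤ T →
      Sc.nrm 0 (S s a (germ X XX y y' b a)) ≤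
        M * ((b - a) ^ γ + (b - a) ^ (2 * γ) * (s - a) ^ (-γ)))
    {a b : ℝ} (ha : 0 ≤ a) (hab : a < b) (hbT : b ≤ T) :
    |∫ s in a..b, φ s (S s a (germ X XX y y' b a))| ≤ 3 * (K * M) * ((b - a) ^ γ * (b - a)) := by
  have hK := hB.nonneg
  obtain ⟨_, hsm⟩ := hS.smoothing (0 - γ) 0 (by linarith)
  have hg := (intervalIntegrable_sub_rpow (γ := γ) (by linarith) a a b).const_mul
    ((b - a) ^ (2 * γ))
  have hg' : IntervalIntegrable (fun s => K * (M * ((b - a) ^ γ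
      + (b - a) ^ (2 * γ) * (s - a) ^ (-γ)))) volume a b :=
    ((intervalIntegrable_const.add hg).const_mul M).const_mul K
  have h1 := intervalIntegral.norm_integral_le_of_norm_le hab.le
    (f := fun s => φ s (S s a (germ X XX y y' b a))) (ae_of_all _ fun s hs => by
      rw [Real.norm_eq_abs]
      refine (hB.hφ s (ha.trans hs.1.le) (hs.2.trans hbT) _ (hsm a s ha hs.1 (hs.2.trans hbT) _
        (germ_mem hγ₀ hctrl ha (hab.le.trans hbT))).1).trans ?_
      exact mul_le_mul_of_nonneg_left (hM a b s ha hab.le hbT hs.1 (hs.2.trans hbT)) hK) hg'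
  rw [Real.norm_eq_abs] at h1
  refine h1.trans ?_
  have hfint : ∫ s in a..b, (s - a) ^ (-γ) = (b - a) ^ (1 - γ) / (1 - γ) := by
    rw [intervalIntegral.integral_comp_sub_right (fun s => s ^ (-γ)) a,
      integral_rpow (Or.inl (by linarith)), sub_self, Real.zero_rpow (by linarith), sub_zero,
      neg_add_eq_sub]
  rw [intervalIntegral.integral_const_mul, intervalIntegral.integral_const_mul,
    intervalIntegral.integral_add intervalIntegrable_const hg,
    intervalIntegral.integral_const_mul, hfint, intervalIntegral.integral_const, smul_eq_mul]
  have hba : 0 < b - a := by linarith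
  have e : (b - a) ^ (2 * γ) * ((b - a) ^ (1 - γ) / (1 - γ))
      = (b - a) ^ γ * (b - a) * (1 / (1 - γ)) := by
    rw [mul_div_assoc', ← Real.rpow_add hba, ← Real.rpow_add_one hba.ne',
      show 2 * γ + (1 - γ) = γ + 1 by ring]
    ring
  rw [e]
  have h2 : 1 / (1 - γ) ≤ 2 := by
    rw [div_le_iff₀ (by linarith)]; linarith
  have h3 : 0 ≤ (b - a) ^ γ * (b - a) := by positivity
  have h4 : (b - a) ^ γ * (b - a) * (1 / (1 - γ)) ≤ (b - a) ^ γ * (b - a) * 2 := by gcongr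
  have h5 : 0 ≤ K * M := by positivity
  nlinarith [mul_le_mul_of_nonneg_left h4 h5]

/-- For every partition of `[0,t]` the rough sum is, up to a power of the mesh, the integral of a
function `F` that is uniformly close to `s ↦ ⟨Z_s, φ_s⟩`. Here `F s` is the sum of the paired germs
over those partition intervals that end strictly before `s`. -/
lemma roughSum_approx (hγ₁ : 1/3 < γ) (hγ₂ : γ ≤ 1/2) (hS : IsPropagator Sc T L S)
    (hX : IsRoughPath 0 T γ X XX) (hctrl : IsControlledVec Sc 0 T γ 0 X y y')
    (hB : Bounds Sc T γ S X XX y y' φ K)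
    {Z : ℝ → E} (hZ : IsRoughConv Sc T (0 - 2 * γ) S X XX y y' Z)
    (hZmem : ∀ t, 0 ≤ t → t ≤ T → Z t ∈ Sc.carrier 0)
    (hφcont : ∀ t, 0 ≤ t → t ≤ T → ∀ ε > (0:ℝ), ∃ δ > (0:ℝ), ∀ t', 0 ≤ t' → t' ≤ T →
      |t' - t| < δ → ∀ v ∈ Sc.carrier 0, |φ t' v - φ t v| ≤ ε * Sc.nrm 0 v) :
    ∃ C, 0 ≤ C ∧ ∀ t, 0 ≤ t → t ≤ T → ∀ k p δ, 0 ≤ δ → IsPartition 0 t k p → MeshLE k p δ →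
      ∃ F : ℝ → ℝ, IntegrableOn F (Ioc 0 t) ∧
        (∀ s ∈ Ioc 0 t, |F s - φ s (Z s)| ≤ C * (δ ^ ((3 * γ - 1) / 2) + δ ^ γ)) ∧
        |roughSumR X XX (fun r i => ∫ s in r..t, φ s (S s r (y r i)))
          (fun r i j => ∫ s in r..t, φ s (S s r (y' r i j))) k p - ∫ s in Ioc 0 t, F s|
          ≤ C * t * δ ^ γ := by
  have hγ : 0 < γ := by linarith
  have hK := hB.nonneg
  obtain ⟨C₁, hC₁, hconv⟩ := convSum_close hγ₁ hγ₂ hS hX hctrl hB hZ hZmem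
  obtain ⟨M, hM0, hM⟩ := germ_bound hctrl hB
  obtain ⟨_, hsm⟩ := hS.smoothing (0 - γ) 0 (by linarith)
  refine ⟨K * C₁ + 3 * (K * M), by positivity, fun t ht htT k p δ hδ hp hmesh => ?_⟩
  have hp0 : ∀ j ≤ k, 0 ≤ p j := fun j hj => hp.left_le hj
  have hpt : ∀ j ≤ k, p j ≤ t := fun j hj => hp.le_right hj
  have hpT : ∀ j ≤ k, p j ≤ T := fun j hj => (hpt j hj).trans htT
  set g : ℕ → E := fun j => germ X XX y y' (p (j + 1)) (p j) with hg
  have hgm : ∀ j ≤ k, g j ∈ Sc.carrier (0 - γ) := fun j hj => germ_mem hγ hctrl (hp0 j hj) (hpT j hj)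
  set G : ℕ → ℝ → ℝ := fun j s => φ s (S s (p j) (g j)) with hG
  have hGi : ∀ j < k, IntervalIntegrable (G j) volume (p j) t := fun j hj =>
    pairing_intervalIntegrable hγ (by linarith) hS hB hφcont (hp0 j hj.le) (hpt j hj.le) htT
      (hgm j hj.le)
  have hsub : ∀ j < k, uIcc (p j) (p (j + 1)) ⊆ uIcc (p j) t ∧
      uIcc (p (j + 1)) t ⊆ uIcc (p j) t := by
    intro j hj
    have h1 := (hp.mono j hj).le
    have h2 := hpt (j + 1) hj
    rw [uIcc_of_le h1, uIcc_of_le h2, uIcc_of_le (h1.trans h2)]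
    exact ⟨Icc_subset_Icc_right h2, Icc_subset_Icc_left h1⟩
  have hGi1 : ∀ j < k, IntervalIntegrable (G j) volume (p j) (p (j + 1)) := fun j hj =>
    (hGi j hj).mono_set (hsub j hj).1
  have hGi2 : ∀ j < k, IntervalIntegrable (G j) volume (p (j + 1)) t := fun j hj =>
    (hGi j hj).mono_set (hsub j hj).2
  have hcap : ∀ j < k, Ioc 0 t ∩ Ioi (p (j + 1)) = Ioc (p (j + 1)) t := by
    intro j hj
    ext s
    simp only [mem_inter_iff, mem_Ioc, mem_Ioi]
    have := hp0 (j + 1) hj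
    constructor
    · rintro ⟨⟨_, h⟩, h'⟩; exact ⟨h', h⟩
    · rintro ⟨h, h'⟩; exact ⟨⟨by linarith, h'⟩, h⟩
  have hFi : ∀ j < k, IntegrableOn ((Ioi (p (j + 1))).indicator (G j)) (Ioc 0 t) := by
    intro j hj
    rw [IntegrableOn, integrable_indicator_iff measurableSet_Ioi, IntegrableOn,
      Measure.restrict_restrict measurableSet_Ioi, inter_comm, hcap j hj]
    exact (intervalIntegrable_iff_integrableOn_Ioc_of_le (hpt (j + 1) hj)).1 (hGi2 j hj)
  refine ⟨fun s => ∑ j ∈ Finset.range k, (Ioi (p (j + 1))).indicator (G j) s, ?_, ?_, ?_⟩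
  · exact integrable_finsetSum _ fun j hj => hFi j (Finset.mem_range.1 hj)
  · intro s hs
    obtain ⟨m, hmk, hms, hsm'⟩ := exists_mem_partition hp hs
    have hsT : s ≤ T := hs.2.trans htT
    have hsum : ∑ j ∈ Finset.range k, (Ioi (p (j + 1))).indicator (G j) s
        = ∑ j ∈ Finset.range m, G j s := by
      rw [← Finset.sum_subset (Finset.range_subset_range.2 hmk.le)]
      · refine Finset.sum_congr rfl fun j hj => indicator_of_mem ?_ _
        have hj := Finset.mem_range.1 hj
        exact (hp.le (i := j + 1) (j := m) hj hmk.le).trans_lt hms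
      · intro j hj hj'
        rw [Finset.mem_range] at hj hj'
        refine indicator_of_notMem (fun h => ?_) _
        have := hp.le (i := m + 1) (j := j + 1) (by omega) hj
        exact absurd (mem_Ioi.1 h) (not_lt.2 (hsm'.trans this))
    simp only [hsum]
    -- the partition of `[0,s]` that follows `p` up to `p m` and then jumps to `s`
    set q : ℕ → ℝ := fun i => if i ≤ m then p i else s with hq
    have hqle : ∀ i ≤ m, q i = p i := fun i hi => by simp [hq, hi]
    have hqm : q (m + 1) = s := by simp [hq]
    have hqp : IsPartition 0 s (m + 1) q := by
      refine ⟨Nat.succ_pos m, by rw [hqle 0 (Nat.zero_le _), hp.first], hqm, fun i hi => ?_⟩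
      rcases Nat.lt_succ_iff_lt_or_eq.1 hi with h | rfl
      · rw [hqle i h.le, hqle (i + 1) h]; exact hp.mono i (h.trans hmk)
      · rw [hqle i le_rfl, hqm]; exact hms
    have hqmesh : MeshLE (m + 1) q δ := by
      intro i hi
      rcases Nat.lt_succ_iff_lt_or_eq.1 hi with h | rfl
      · rw [hqle i h.le, hqle (i + 1) h]; exact hmesh i (h.trans hmk)
      · rw [hqle i le_rfl, hqm]; linarith [hmesh i hmk]
    have hc := hconv s hs.1 hsT (m + 1) q δ hδ hqp hqmesh
    set last := S s (p m) (germ X XX y y' s (p m)) with hlast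
    have hce : convSum S X XX y y' s (m + 1) q
        = (∑ j ∈ Finset.range m, S s (p j) (g j)) + last := by
      rw [convSum, Finset.sum_range_succ, hqm, hqle m le_rfl]
      congr 1
      refine Finset.sum_congr rfl fun j hj => ?_
      have hj := Finset.mem_range.1 hj
      rw [hqle j hj.le, hqle (j + 1) hj]
    have hlm : last ∈ Sc.carrier 0 :=
      (hsm _ s (hp0 m hmk.le) hms hsT _ (germ_mem hγ hctrl (hp0 m hmk.le) (hpT m hmk.le))).1
    have hcm : (∑ j ∈ Finset.range m, S s (p j) (g j)) + last - Z s ∈ Sc.carrier 0 := by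
      refine Submodule.sub_mem _ (Submodule.add_mem _ (Submodule.sum_mem _ fun j hj => ?_) hlm)
        (hZmem s hs.1.le hsT)
      have hj := Finset.mem_range.1 hj
      exact (hsm _ s (hp0 j (by omega)) ((hp.le hj.le hmk.le).trans_lt hms) hsT _
        (hgm j (by omega))).1
    rw [hce] at hc
    have hln : Sc.nrm 0 last ≤ M * (2 * δ ^ γ) := by
      refine (hM (p m) s s (hp0 m hmk.le) hms.le hsT hms hsT).trans ?_
      have h0 : 0 < s - p m := by linarith
      rw [← Real.rpow_add h0, show 2 * γ + -γ = γ by ring, ← two_mul]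
      have : s - p m ≤ δ := by linarith [hmesh m hmk]
      gcongr
    have e : ∑ j ∈ Finset.range m, G j s - φ s (Z s)
        = φ s ((∑ j ∈ Finset.range m, S s (p j) (g j)) + last - Z s) - φ s last := by
      simp only [hG, map_sub, map_add, map_sum]; ring
    rw [e]
    have h1 := (hB.hφ s hs.1.le hsT _ hcm).trans (mul_le_mul_of_nonneg_left hc hK)
    have h2 := (hB.hφ s hs.1.le hsT _ hlm).trans (mul_le_mul_of_nonneg_left hln hK)
    refine (abs_sub _ _).trans ((add_le_add h1 h2).trans ?_)
    have h3 : 0 ≤ δ ^ ((3 * γ - 1) / 2) := Real.rpow_nonneg hδ _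
    have h4 : 0 ≤ δ ^ γ := Real.rpow_nonneg hδ _
    have h5 : 0 ≤ 3 * (K * M) * δ ^ ((3 * γ - 1) / 2) := by positivity
    have h6 : 0 ≤ K * C₁ * δ ^ γ := by positivity
    have h7 : 0 ≤ K * M * δ ^ γ := by positivity
    nlinarith [h5, h6, h7]
  · have hFint : ∫ s in Ioc 0 t, ∑ j ∈ Finset.range k, (Ioi (p (j + 1))).indicator (G j) s
        = ∑ j ∈ Finset.range k, ∫ s in p (j + 1)..t, G j s := by
      rw [integral_finsetSum _ fun j hj => hFi j (Finset.mem_range.1 hj)]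
      refine Finset.sum_congr rfl fun j hj => ?_
      have hj := Finset.mem_range.1 hj
      rw [setIntegral_indicator measurableSet_Ioi, hcap j hj,
        intervalIntegral.integral_of_le (hpt (j + 1) hj)]
    have hR : roughSumR X XX (fun r i => ∫ s in r..t, φ s (S s r (y r i)))
          (fun r i j => ∫ s in r..t, φ s (S s r (y' r i j))) k p
        = ∑ j ∈ Finset.range k, ∫ s in p j..t, G j s := by
      refine Finset.sum_congr rfl fun j hj => ?_
      have hj := Finset.mem_range.1 hj
      exact rough_summand_eq hγ (by linarith) hS hctrl hB hφcont _ (hp0 j hj.le) (hpt j hj.le) htT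
    rw [hFint, hR, ← Finset.sum_sub_distrib]
    calc _ ≤ ∑ j ∈ Finset.range k, 3 * (K * M) * (δ ^ γ * (p (j + 1) - p j)) := by
            refine (Finset.abs_sum_le_sum_abs _ _).trans (Finset.sum_le_sum fun j hj => ?_)
            have hj := Finset.mem_range.1 hj
            rw [← intervalIntegral.integral_add_adjacent_intervals (hGi1 j hj) (hGi2 j hj),
              add_sub_cancel_right]
            refine (local_term_bound hγ hγ₂ hS hctrl hB hM0 hM (hp0 j hj.le) (hp.mono j hj)
              (hpT (j + 1) hj)).trans ?_
            have h0 : 0 ≤ p (j + 1) - p j := sub_nonneg.2 (hp.mono j hj).le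
            have := hmesh j hj
            gcongr
      _ = 3 * (K * M) * (δ ^ γ * t) := by
            rw [← Finset.mul_sum, ← Finset.mul_sum, Finset.sum_range_sub p, hp.first, hp.last,
              sub_zero]
      _ ≤ _ := by
            have : 0 ≤ K * C₁ * (δ ^ γ * t) := by
              have := Real.rpow_nonneg hδ γ
              positivity
            nlinarith [this]

/-- A uniform limit (almost everywhere) of integrable functions on a finite measure space is
integrable. -/
lemma integrable_of_uniform_approx {μ : Measure ℝ} [IsFiniteMeasure μ] {f : ℝ → ℝ}
    (h : ∀ ε > 0, ∃ F : ℝ → ℝ, Integrable F μ ∧ ∀ᵐ s ∂μ, |F s - f s| ≤ ε) : Integrable f μ := by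
  choose F hF hFf using fun n : ℕ => h (1 / ((n : ℝ) + 1)) (by positivity)
  have hmeas : AEStronglyMeasurable f μ := by
    refine aestronglyMeasurable_of_tendsto_ae atTop (fun n => (hF n).1) ?_
    filter_upwards [ae_all_iff.2 hFf] with s hs
    rw [tendsto_iff_dist_tendsto_zero]
    exact squeeze_zero (fun n => dist_nonneg) (fun n => by rw [Real.dist_eq]; exact hs n)
      tendsto_one_div_add_atTop_nhds_zero_nat
  have hd : Integrable (fun s => F 0 s - f s) μ := by
    refine Integrable.of_bound ((hF 0).1.sub hmeas) _ (hFf 0)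
  have := (hF 0).sub hd
  refine this.congr (ae_of_all _ fun s => ?_)
  simp

end Pairing

end Aux


/-- **Lemma 5.6 (Fubini-type theorem for rough convolutions)**.  For a continuous path
`φ` of bounded linear functionals on `B₀`, a `d`-dimensional controlled path
`(y,y') ∈ D^{2γ}_{X,0}` and its rough convolution `Z_s = ∫₀^s S_{s,r} y_r · d𝐗_r`,
one has, for every `t ∈ [0,T]`,
`∫₀^t ⟨Z_s, φ_s⟩ ds = ∫₀^t (∫_r^t ⟨S_{s,r} y_r, φ_s⟩ ds) · d𝐗_r`,
the right-hand side being the finite-dimensional rough integral of the `ℝ^d`-valued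
controlled path `r ↦ (∫_r^t ⟨S_{s,r} y^i_r, φ_s⟩ ds)_i` with Gubinelli derivative
`r ↦ (∫_r^t ⟨S_{s,r} y'^{,ij}_r, φ_s⟩ ds)_{ij}`. -/
theorem fubini_for_rough_convolutions
    {E : Type*} [AddCommGroup E] [Module ℝ E] (Sc : Scale E)
    (T : ℝ) (hT : 0 < T)
    (L : ℝ → E →ₗ[ℝ] E) (S : ℝ → ℝ → E →ₗ[ℝ] E) (hS : IsPropagator Sc T L S)
    (γ : ℝ) (hγ₁ : 1/3 < γ) (hγ₂ : γ ≤ 1/2)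
    {d : ℕ} (X : ℝ → Fin d → ℝ) (XX : ℝ → ℝ → Fin d → Fin d → ℝ)
    (hX : IsRoughPath 0 T γ X XX)
    (y : ℝ → Fin d → E) (y' : ℝ → Fin d → Fin d → E)
    (hctrl : IsControlledVec Sc 0 T γ 0 X y y')
    -- `Z` is the rough convolution of `(y,y')`, with values in `B₀`
    (Z : ℝ → E) (hZ : IsRoughConv Sc T (0 - 2 * γ) S X XX y y' Z)
    (hZmem : ∀ t, 0 ≤ t → t ≤ T → Z t ∈ Sc.carrier 0)
    -- `φ ∈ C([0,T]; B₀*)`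
    (φ : ℝ → E →ₗ[ℝ] ℝ)
    (hφbdd : ∃ c : ℝ, ∀ t, 0 ≤ t → t ≤ T → ∀ v ∈ Sc.carrier 0, |φ t v| ≤ c * Sc.nrm 0 v)
    (hφcont : ∀ t, 0 ≤ t → t ≤ T → ∀ ε > (0:ℝ), ∃ δ > (0:ℝ), ∀ t', 0 ≤ t' → t' ≤ T →
      |t' - t| < δ → ∀ v ∈ Sc.carrier 0, |φ t' v - φ t v| ≤ ε * Sc.nrm 0 v) :
    ∀ t, 0 ≤ t → t ≤ T →
      IsRoughIntegralR X XX
        (fun r i => ∫ s in r..t, φ s (S s r (y r i)))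
        (fun r i j => ∫ s in r..t, φ s (S s r (y' r i j)))
        t (∫ s in (0:ℝ)..t, φ s (Z s)) := by
  intro t ht htT
  have hγ : 0 < γ := by linarith
  have hκ : 0 < (3 * γ - 1) / 2 := by linarith
  obtain ⟨K, hB⟩ := exists_bounds Sc T L S hS γ hγ₁ hγ₂ X XX hX y y' hctrl φ hφbdd
  obtain ⟨C, hC, happ⟩ := roughSum_approx hγ₁ hγ₂ hS hX hctrl hB hZ hZmem hφcont
  refine ⟨fun h => by rw [h, intervalIntegral.integral_same], fun ε hε => ?_⟩
  rcases ht.eq_or_lt with rfl | ht0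
  · -- the degenerate interval `[0,0]` has no strictly increasing partition
    refine ⟨1, one_pos, fun k p hp _ => ?_⟩
    have h1 := hp.mono 0 hp.pos
    have h2 := hp.le_right (i := 0 + 1) hp.pos
    rw [hp.first] at h1
    linarith
  have hsmall : ∀ η > 0, ∃ δ > 0, C * (δ ^ ((3 * γ - 1) / 2) + δ ^ γ) < η := by
    intro η hη
    have hc : Filter.Tendsto (fun δ : ℝ => C * (δ ^ ((3 * γ - 1) / 2) + δ ^ γ))
        (nhdsWithin 0 (Set.Ioi 0)) (nhds 0) := by
      have h1 : ContinuousAt (fun δ : ℝ => C * (δ ^ ((3 * γ - 1) / 2) + δ ^ γ)) 0 :=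
        ((Real.continuousAt_rpow_const _ _ (Or.inr hκ.le)).add
          (Real.continuousAt_rpow_const _ _ (Or.inr hγ.le))).const_mul C
      have h2 := h1.tendsto
      simp only [Real.zero_rpow hκ.ne', Real.zero_rpow hγ.ne', add_zero, mul_zero] at h2
      exact h2.mono_left nhdsWithin_le_nhds
    obtain ⟨δ, h1, h2⟩ := ((hc.eventually (gt_mem_nhds hη)).and self_mem_nhdsWithin).exists
    exact ⟨δ, h2, h1⟩
  have hfint : MeasureTheory.IntegrableOn (fun s => φ s (Z s)) (Set.Ioc 0 t) := by
    refine integrable_of_uniform_approx fun η hη => ?_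
    obtain ⟨δ, hδ, hlt⟩ := hsmall η hη
    -- uniform partition with `n + 1` intervals of length `t / (n + 1) ≤ δ`
    obtain ⟨n, hn⟩ := exists_nat_gt (t / δ)
    have hn1 : (0 : ℝ) < (n : ℝ) + 1 := by positivity
    have hlen : t / ((n : ℝ) + 1) ≤ δ := by
      rw [div_lt_iff₀ hδ] at hn
      rw [div_le_iff₀ hn1]
      nlinarith
    have hp : IsPartition 0 t (n + 1) (fun i => (i : ℝ) * (t / ((n : ℝ) + 1))) := by
      refine ⟨Nat.succ_pos n, by simp, ?_, fun i _ => ?_⟩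
      · push_cast; field_simp
      · have : 0 < t / ((n : ℝ) + 1) := by positivity
        push_cast; nlinarith
    obtain ⟨F, hF, hFZ, -⟩ := happ t ht htT (n + 1) _ δ hδ.le hp fun i _ => by
      push_cast; linarith
    exact ⟨F, hF, (MeasureTheory.ae_restrict_mem measurableSet_Ioc).mono fun s hs =>
      (hFZ s hs).trans hlt.le⟩
  obtain ⟨δ, hδ, hlt⟩ := hsmall (ε / (2 * t)) (by positivity)
  refine ⟨δ, hδ, fun k p hp hmesh => ?_⟩
  obtain ⟨F, hF, hFZ, hR⟩ := happ t ht htT k p δ hδ.le hp hmesh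
  have h1 : |(∫ s in Set.Ioc 0 t, F s) - ∫ s in (0:ℝ)..t, φ s (Z s)|
      ≤ C * (δ ^ ((3 * γ - 1) / 2) + δ ^ γ) * t := by
    rw [intervalIntegral.integral_of_le ht, ← MeasureTheory.integral_sub hF hfint,
      ← Real.norm_eq_abs]
    have := MeasureTheory.norm_setIntegral_le_of_norm_le_const (μ := MeasureTheory.volume)
      (s := Set.Ioc 0 t) (f := fun s => F s - φ s (Z s)) (by simp) hFZ
    simpa [MeasureTheory.measureReal_def, ht] using this
  have h2 : C * t * δ ^ γ ≤ C * (δ ^ ((3 * γ - 1) / 2) + δ ^ γ) * t := by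
    have : 0 ≤ C * δ ^ ((3 * γ - 1) / 2) * t := by positivity
    nlinarith [this]
  have h3 : C * (δ ^ ((3 * γ - 1) / 2) + δ ^ γ) * t < ε / 2 := by
    rw [lt_div_iff₀ (by positivity)] at hlt
    linarith
  have h4 := abs_sub_le (roughSumR X XX (fun r i => ∫ s in r..t, φ s (S s r (y r i)))
    (fun r i j => ∫ s in r..t, φ s (S s r (y' r i j))) k p) (∫ s in Set.Ioc 0 t, F s)
    (∫ s in (0:ℝ)..t, φ s (Z s))
  linarith

end RoughEvol
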